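/- arXiv:1107.5552 — 3 statements merged into one kernel-verified Lean document; each statement's English description precedes it below -/
import Mathlib

section
/- Let G=(V,D,B) be an acyclic mixed graph with mixed components G_1,…,G_k. Then: (i) G is rationally identifiable if and only if all of G_1,…,G_k are rationally identifiable, and G is generically identifiable if and only if all of G_1,…,G_k are generically identifiable; (ii) φ_G is generically infinite-to-one if and only if φ_{G_j} is generically infinite-to-one for some j; (iii) if, for each j, the complex parametrization φ_{G_j,ℂ} is generically h_j-to-one with h_j<∞, then φ_{G,ℂ} is generically h-to-one with h=∏_{j=1}^k h_j. -/
open scoped Classical Matrix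

/-- A mixed graph `G = (V, D, B)`: a finite vertex set `V`, a set `D` of directed
edges, and a symmetric set `B` of bidirected edges; no self-loops. -/
structure MixedGraph (V : Type*) [Fintype V] [DecidableEq V] where
  D : Finset (V × V)
  B : Finset (V × V)
  B_symm : ∀ v w : V, (v, w) ∈ B → (w, v) ∈ B
  D_irrefl : ∀ v : V, (v, v) ∉ D
  B_irrefl : ∀ v : V, (v, v) ∉ B

namespace MixedGraph

variable {V : Type*} [Fintype V] [DecidableEq V]

/-- The parents of `v`: nodes `w` with `w → v ∈ D`. -/
def pa (G : MixedGraph V) (v : V) : Finset V :=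
  Finset.univ.filter fun w => (w, v) ∈ G.D

/-- The siblings of `v`: nodes `w` with `w ↔ v ∈ B`. -/
def sib (G : MixedGraph V) (v : V) : Finset V :=
  Finset.univ.filter fun w => (w, v) ∈ G.B

/-- A trek: a walk with no colliding arrowheads.  The field `left` lists the nodes of the
left-hand side from top (head) to source (last); `right` lists the nodes of the right-hand
side from top (head) to target (last); consecutive nodes in each list are joined by directed
edges pointing away from the head.  If `hasBidir` then the two heads are joined by a
bidirected edge, otherwise they coincide (the top node). -/
structure Trek (G : MixedGraph V) where
  left : List V
  right : List V
  left_ne : left ≠ []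
  right_ne : right ≠ []
  hasBidir : Bool
  left_chain : left.Chain' fun a b => (a, b) ∈ G.D
  right_chain : right.Chain' fun a b => (a, b) ∈ G.D
  head_cond : if hasBidir then (left.head left_ne, right.head right_ne) ∈ G.B
              else left.head left_ne = right.head right_ne

namespace Trek

variable {G : MixedGraph V}

/-- The source of a trek. -/
def source (π : G.Trek) : V := π.left.getLast π.left_ne

/-- The target of a trek. -/
def target (π : G.Trek) : V := π.right.getLast π.right_ne

/-- The left-hand side `Left(π)` of a trek, as a set of nodes. -/
def leftSet (π : G.Trek) : Finset V := π.left.toFinset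

/-- The right-hand side `Right(π)` of a trek, as a set of nodes. -/
def rightSet (π : G.Trek) : Finset V := π.right.toFinset

/-- A half-trek is a trek whose left-hand side consists of exactly one node. -/
def IsHalfTrek (π : G.Trek) : Prop := π.leftSet.card = 1

/-- The number of directed edges traversed by the trek. -/
def nEdges (π : G.Trek) : ℕ := (π.left.length - 1) + (π.right.length - 1)

end Trek

/-- `htr v`: the set of nodes `w ∉ {v} ∪ sib(v)` reachable from `v` by a half-trek
containing at least one directed edge. -/
def htr (G : MixedGraph V) (v : V) : Set V :=
  {w | w ≠ v ∧ w ∉ G.sib v ∧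
    ∃ π : G.Trek, π.source = v ∧ π.target = w ∧ π.IsHalfTrek ∧ 1 ≤ π.nEdges}

/-- `f` encodes a system of treks from `Y` to `P`: treks with pairwise distinct sources
forming `Y` and pairwise distinct targets forming `P`. -/
def IsTrekSystem (G : MixedGraph V) (Y P : Finset V) (f : V → G.Trek) : Prop :=
  (∀ y ∈ Y, (f y).source = y) ∧
  (Y.image fun y => (f y).target) = P ∧
  ∀ y ∈ Y, ∀ y' ∈ Y, y ≠ y' → (f y).target ≠ (f y').target

/-- The treks `f y`, `y ∈ Y`, have no sided intersection. -/
def NoSidedIntersection (G : MixedGraph V) (Y : Finset V) (f : V → G.Trek) : Prop :=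
  ∀ y ∈ Y, ∀ y' ∈ Y, y ≠ y' →
    Disjoint (f y).leftSet (f y').leftSet ∧ Disjoint (f y).rightSet (f y').rightSet

/-- `Y` satisfies the half-trek criterion with respect to `v`. -/
def SatisfiesHTC (G : MixedGraph V) (v : V) (Y : Finset V) : Prop :=
  Y.card = (G.pa v).card ∧
  (∀ y ∈ Y, y ≠ v ∧ y ∉ G.sib v) ∧
  ∃ f : V → G.Trek, (∀ y ∈ Y, (f y).IsHalfTrek) ∧
    G.IsTrekSystem Y (G.pa v) f ∧ G.NoSidedIntersection Y f

/-- `Y` satisfies the weak half-trek criterion with respect to `v`. -/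
def SatisfiesWeakHTC (G : MixedGraph V) (v : V) (Y : Finset V) : Prop :=
  Y.card = (G.pa v).card ∧
  (∀ y ∈ Y, y ≠ v ∧ y ∉ G.sib v) ∧
  ∃ f : V → G.Trek, (∀ y ∈ Y, y ∈ G.htr v → (f y).IsHalfTrek) ∧
    G.IsTrekSystem Y (G.pa v) f ∧ G.NoSidedIntersection Y f

/-- `G` is HTC-identifiable. -/
def HTCIdentifiable (G : MixedGraph V) : Prop :=
  ∃ Y : V → Finset V,
    (∀ v, G.SatisfiesHTC v (Y v)) ∧
    ∃ r : V → V → Prop, IsStrictTotalOrder V r ∧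
      ∀ v w, w ∈ Y v → w ∈ G.htr v → r w v

/-- `G` is HTC-infinite-to-one. -/
def HTCInfiniteToOne (G : MixedGraph V) : Prop :=
  ∀ Y : V → Finset V,
    (∃ v, ¬ G.SatisfiesHTC v (Y v)) ∨ ∃ v w, v ∈ Y w ∧ w ∈ Y v

/-- `G` is acyclic: no directed cycle can be formed from the edges in `D`. -/
def Acyclic (G : MixedGraph V) : Prop :=
  ∀ v : V, ¬ Relation.TransGen (fun a b => (a, b) ∈ G.D) v v

/-- `G` is simple: at most one edge between any pair of nodes. -/
def Simple (G : MixedGraph V) : Prop :=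
  (∀ e ∈ G.D, e ∉ G.B) ∧ ∀ v w : V, (v, w) ∈ G.D → (w, v) ∉ G.D

/-- `ℝ^D_reg`: real matrices supported on `D` with `I - Λ` invertible. -/
def RDreg (G : MixedGraph V) : Set (Matrix V V ℝ) :=
  {Λ | (∀ v w, (v, w) ∉ G.D → Λ v w = 0) ∧ IsUnit (1 - Λ).det}

/-- `PD(B)`: positive definite symmetric matrices supported on the diagonal and `B`. -/
def PDB (G : MixedGraph V) : Set (Matrix V V ℝ) :=
  {Ω | Ω.PosDef ∧ ∀ v w, v ≠ w → (v, w) ∉ G.B → Ω v w = 0}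

/-- The parameter space `Θ = ℝ^D_reg × PD(B)`. -/
def Theta (G : MixedGraph V) : Set (Matrix V V ℝ × Matrix V V ℝ) :=
  {θ | θ.1 ∈ G.RDreg ∧ θ.2 ∈ G.PDB}

/-- The parametrization `φ(Λ, Ω) = (I-Λ)^{-T} Ω (I-Λ)^{-1}`. -/
noncomputable def phi {R : Type*} [CommRing R] (Λ Ω : Matrix V V R) : Matrix V V R :=
  ((1 - Λ)⁻¹)ᵀ * Ω * (1 - Λ)⁻¹

/-- Evaluation of a polynomial in the coordinates `λ_vw` (left summand) and `ω_vw`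
(right summand) at a parameter point `θ = (Λ, Ω)`. -/
noncomputable def evalParam (θ : Matrix V V ℝ × Matrix V V ℝ)
    (p : MvPolynomial ((V × V) ⊕ (V × V)) ℝ) : ℝ :=
  MvPolynomial.eval (Sum.elim (fun e => θ.1 e.1 e.2) (fun e => θ.2 e.1 e.2)) p

/-- `V₀` is a proper algebraic subset of `Θ`: the intersection with `Θ` of the zero set of a
polynomial in the coordinates that does not vanish identically on `Θ`. -/
def IsProperAlgebraic (G : MixedGraph V)
    (V₀ : Set (Matrix V V ℝ × Matrix V V ℝ)) : Prop :=
  ∃ p : MvPolynomial ((V × V) ⊕ (V × V)) ℝ,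
    (∃ θ ∈ G.Theta, evalParam θ p ≠ 0) ∧
    V₀ = {θ ∈ G.Theta | evalParam θ p = 0}

/-- Evaluation of a polynomial in the entries of a covariance matrix. -/
noncomputable def evalAtCov (S : Matrix V V ℝ) (p : MvPolynomial (V × V) ℝ) : ℝ :=
  MvPolynomial.eval (fun e => S e.1 e.2) p

/-- `G` is rationally identifiable: some rational map `ψ` (each coordinate a quotient of
polynomials in the entries of the covariance matrix) satisfies `ψ ∘ φ_G = id` off a proper
algebraic subset of `Θ`. -/
def RationallyIdentifiable (G : MixedGraph V) : Prop :=
  ∃ V₀, G.IsProperAlgebraic V₀ ∧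
    ∃ p q : ((V × V) ⊕ (V × V)) → MvPolynomial (V × V) ℝ,
      ∀ θ ∈ G.Theta \ V₀,
        (∀ i, evalAtCov (phi θ.1 θ.2) (q i) ≠ 0) ∧
        (∀ v w : V, θ.1 v w * evalAtCov (phi θ.1 θ.2) (q (Sum.inl (v, w)))
            = evalAtCov (phi θ.1 θ.2) (p (Sum.inl (v, w)))) ∧
        (∀ v w : V, θ.2 v w * evalAtCov (phi θ.1 θ.2) (q (Sum.inr (v, w)))
            = evalAtCov (phi θ.1 θ.2) (p (Sum.inr (v, w))))

/-- `G` is generically identifiable: `φ_G` is injective off a proper algebraic subset. -/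
def GenericallyIdentifiable (G : MixedGraph V) : Prop :=
  ∃ V₀, G.IsProperAlgebraic V₀ ∧
    Set.InjOn (fun θ : Matrix V V ℝ × Matrix V V ℝ => phi θ.1 θ.2) (G.Theta \ V₀)

/-- `φ_G` is generically infinite-to-one. -/
def GenInfiniteToOne (G : MixedGraph V) : Prop :=
  ∃ V₀, G.IsProperAlgebraic V₀ ∧
    ∀ θ ∈ G.Theta \ V₀,
      {θ' ∈ G.Theta | phi θ'.1 θ'.2 = phi θ.1 θ.2}.Infinite

end MixedGraph

namespace MixedGraph

variable {V : Type*} [Fintype V] [DecidableEq V]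

/-- Connectivity in the bidirected part `(V, B)`. -/
def bidirConn (G : MixedGraph V) : V → V → Prop :=
  Relation.ReflTransGen fun a b => (a, b) ∈ G.B

/-- The vertex set of the connected component of `c` in the bidirected part. -/
noncomputable def comp (G : MixedGraph V) (c : V) : Finset V :=
  Finset.univ.filter fun w => G.bidirConn c w

/-- `V_j = C_j ∪ ⋃_{v ∈ C_j} pa(v)`. -/
noncomputable def compV (G : MixedGraph V) (c : V) : Finset V :=
  G.comp c ∪ (G.comp c).biUnion fun v => G.pa v

/-- The mixed component of `G` containing `c`: the mixed graph on `V_j` with directed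
edges `D_j = {v → w ∈ D : v ∈ V_j, w ∈ C_j}` and bidirected edges `B_j = B ∩ (C_j × C_j)`. -/
noncomputable def component (G : MixedGraph V) (c : V) :
    MixedGraph {x : V // x ∈ G.compV c} where
  D := Finset.univ.filter fun e : {x : V // x ∈ G.compV c} × {x : V // x ∈ G.compV c} =>
        ((e.1 : V), (e.2 : V)) ∈ G.D ∧ (e.2 : V) ∈ G.comp c
  B := Finset.univ.filter fun e : {x : V // x ∈ G.compV c} × {x : V // x ∈ G.compV c} =>
        ((e.1 : V), (e.2 : V)) ∈ G.B ∧ (e.1 : V) ∈ G.comp c ∧ (e.2 : V) ∈ G.comp c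
  B_symm := by
    intro v w h
    simp only [Finset.mem_filter, Finset.mem_univ, true_and] at h ⊢
    exact ⟨G.B_symm _ _ h.1, h.2.2, h.2.1⟩
  D_irrefl := by
    intro v h
    simp only [Finset.mem_filter, Finset.mem_univ, true_and] at h
    exact G.D_irrefl _ h.1
  B_irrefl := by
    intro v h
    simp only [Finset.mem_filter, Finset.mem_univ, true_and] at h
    exact G.B_irrefl _ h.1

end MixedGraph

namespace MixedGraph

variable {V : Type*} [Fintype V] [DecidableEq V]

/-- The complex parameter space `ℂ^D_reg × ℂ^B_sym`. -/
def ThetaC (G : MixedGraph V) : Set (Matrix V V ℂ × Matrix V V ℂ) :=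
  {θ | ((∀ v w, (v, w) ∉ G.D → θ.1 v w = 0) ∧ IsUnit (1 - θ.1).det) ∧
       (θ.2.IsSymm ∧ ∀ v w, v ≠ w → (v, w) ∉ G.B → θ.2 v w = 0)}

/-- Evaluation of a complex polynomial in the coordinates at a parameter point. -/
noncomputable def evalParamC (θ : Matrix V V ℂ × Matrix V V ℂ)
    (p : MvPolynomial ((V × V) ⊕ (V × V)) ℂ) : ℂ :=
  MvPolynomial.eval (Sum.elim (fun e => θ.1 e.1 e.2) (fun e => θ.2 e.1 e.2)) p

/-- The complex parametrization `φ_{G,ℂ}` is generically `h`-to-one, for finite `h`. -/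
def GenHToOneC (G : MixedGraph V) (h : ℕ) : Prop :=
  ∃ p : MvPolynomial ((V × V) ⊕ (V × V)) ℂ,
    (∃ θ ∈ G.ThetaC, evalParamC θ p ≠ 0) ∧
    ∀ θ ∈ G.ThetaC, evalParamC θ p ≠ 0 →
      {θ' ∈ G.ThetaC | phi θ'.1 θ'.2 = phi θ.1 θ.2}.Finite ∧
      Nat.card {θ' ∈ G.ThetaC | phi θ'.1 θ'.2 = phi θ.1 θ.2} = h

end MixedGraph


namespace MCD

section LinAlg

set_option linter.unusedSectionVars false
set_option linter.unusedVariables false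

variable {V : Type*} [Fintype V] [DecidableEq V] {K : Type*} [Field K]

/-- Unit upper triangular with respect to `f`. -/
def UT (f : V → ℕ) (X : Matrix V V K) : Prop :=
  (∀ v, X v v = 1) ∧ ∀ a b, f b < f a → X a b = 0

/-- All leading principal submatrices are nonsingular. -/
def Good (f : V → ℕ) (S : Matrix V V K) : Prop :=
  ∀ (n : ℕ) (y : V → K), (∀ a, n ≤ f a → y a = 0) → (∀ u, f u < n → (S *ᵥ y) u = 0) → y = 0

/-- Leading principal submatrix, completed by an identity block. -/
def Mn (f : V → ℕ) (S : Matrix V V K) (n : ℕ) : Matrix V V K :=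
  Matrix.of fun a b => if f a < n ∧ f b < n then S a b else (1 : Matrix V V K) a b

noncomputable def Xm (f : V → ℕ) (S : Matrix V V K) : Matrix V V K :=
  Matrix.of fun a v => if f a < f v then
    - ((Mn f S (f v))⁻¹ *ᵥ (fun b => if f b < f v then S b v else 0)) a
    else (1 : Matrix V V K) a v

noncomputable def dm (f : V → ℕ) (S : Matrix V V K) (v : V) : K := (S * Xm f S) v v

variable {f : V → ℕ}

theorem UT.det_eq {X : Matrix V V K} (h : UT f X) (hf : Function.Injective f) : X.det = 1 := by
  have hb : X.BlockTriangular f := fun a b hab => h.2 a b hab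
  rw [hb.det]
  apply Finset.prod_eq_one
  intro a _
  have : X.toSquareBlock f a = 1 := by
    ext i j
    have hij : i = j := Subtype.ext (hf (i.2.trans j.2.symm))
    subst hij
    simp [Matrix.toSquareBlock_def, h.1]
  rw [this, Matrix.det_one]

theorem UT.isUnit {X : Matrix V V K} (h : UT f X) (hf : Function.Injective f) : IsUnit X.det := by
  rw [h.det_eq hf]; exact isUnit_one

theorem UT.inv {X : Matrix V V K} (h : UT f X) (hf : Function.Injective f) : UT f X⁻¹ := by
  have hu := h.isUnit hf
  have hb : X.BlockTriangular f := fun a b hab => h.2 a b hab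
  have hi : X⁻¹.BlockTriangular f := by
    let _ := Matrix.invertibleOfIsUnitDet X hu
    exact Matrix.blockTriangular_inv_of_blockTriangular hb
  refine ⟨fun v => ?_, fun a b hab => hi hab⟩
  have h1 : (X * X⁻¹) v v = 1 := by rw [Matrix.mul_nonsing_inv _ hu]; simp
  rw [Matrix.mul_apply, Finset.sum_eq_single v] at h1
  · simpa [h.1] using h1
  · intro w _ hw
    rcases lt_or_gt_of_ne (fun e => hw (hf e)) with h' | h'
    · rw [h.2 _ _ h', zero_mul]
    · rw [show X⁻¹ w v = 0 from hi h', mul_zero]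
  · simp

theorem UT.mul {X Y : Matrix V V K} (hf : Function.Injective f) (hX : UT f X) (hY : UT f Y) :
    UT f (X * Y) := by
  have hb : X.BlockTriangular f := fun a b hab => hX.2 a b hab
  have hb' : Y.BlockTriangular f := fun a b hab => hY.2 a b hab
  refine ⟨fun v => ?_, fun a b hab => (hb.mul hb') hab⟩
  rw [Matrix.mul_apply, Finset.sum_eq_single v]
  · simp [hX.1, hY.1]
  · intro w _ hw
    rcases lt_or_gt_of_ne (fun e => hw (hf e)) with h' | h'
    · rw [hX.2 _ _ h', zero_mul]
    · rw [hY.2 _ _ h', mul_zero]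
  · simp

theorem Mn_mulVec_lt {S : Matrix V V K} {n : ℕ} {y : V → K} (hy : ∀ a, n ≤ f a → y a = 0)
    {u : V} (hu : f u < n) : (Mn f S n *ᵥ y) u = (S *ᵥ y) u := by
  simp only [Matrix.mulVec, dotProduct, Mn, Matrix.of_apply]
  apply Finset.sum_congr rfl
  intro b _
  by_cases hb : f b < n
  · simp [hu, hb]
  · simp [hy b (not_lt.1 hb)]

theorem Mn_mulVec_ge {S : Matrix V V K} {n : ℕ} {y : V → K}
    {u : V} (hu : n ≤ f u) : (Mn f S n *ᵥ y) u = y u := by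
  have : ∀ b, (Mn f S n) u b = (1 : Matrix V V K) u b := by
    intro b
    simp [Mn, not_lt.2 hu]
  simp only [Matrix.mulVec, dotProduct, this]
  simp [Matrix.one_apply]

theorem good_iff {S : Matrix V V K} : Good f S ↔ ∀ n, (Mn f S n).det ≠ 0 := by
  constructor
  · intro h n h0
    obtain ⟨y, hy0, hy⟩ := Matrix.exists_mulVec_eq_zero_iff.2 h0
    have hs : ∀ a, n ≤ f a → y a = 0 := by
      intro a ha
      rw [← Mn_mulVec_ge (S := S) (y := y) ha, hy]; rfl
    apply hy0
    apply h n y hs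
    intro u hu
    rw [← Mn_mulVec_lt hs hu, hy]; rfl
  · intro h n y hs hy
    by_contra h0
    apply h n
    apply Matrix.exists_mulVec_eq_zero_iff.1
    refine ⟨y, h0, ?_⟩
    ext u
    by_cases hu : f u < n
    · rw [Mn_mulVec_lt hs hu, hy u hu]; rfl
    · rw [Mn_mulVec_ge (not_lt.1 hu), hs u (not_lt.1 hu)]; rfl

theorem Mn_eq {S : Matrix V V K} {N n : ℕ} (hN : ∀ v, f v < N) (hn : N ≤ n) :
    Mn f S n = Mn f S N := by
  ext a b
  simp [Mn, hN, fun v => (hN v).trans_le hn]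

theorem good_iff_bdd {S : Matrix V V K} {N : ℕ} (hN : ∀ v, f v < N) :
    Good f S ↔ ∀ n ∈ Finset.range (N + 1), (Mn f S n).det ≠ 0 := by
  rw [good_iff]
  constructor
  · intro h n _; exact h n
  · intro h n
    by_cases hn : n ≤ N
    · exact h n (by simpa [Nat.lt_succ_iff] using hn)
    · rw [Mn_eq hN (le_of_not_ge hn)]
      exact h N (by simp)

theorem UT_Xm (hf : Function.Injective f) (S : Matrix V V K) : UT f (Xm f S) := by
  constructor
  · intro v; simp [Xm]
  · intro a b hab
    have : a ≠ b := by rintro rfl; exact lt_irrefl _ hab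
    simp [Xm, not_lt.2 hab.le, Matrix.one_apply, this]

theorem mul_Xm (hf : Function.Injective f) {S : Matrix V V K} (hS : Good f S) {u v : V} (huv : f u < f v) :
    (S * Xm f S) u v = 0 := by
  set n := f v with hn
  set s : V → K := fun b => if f b < n then S b v else 0 with hs
  set y := (Mn f S n)⁻¹ *ᵥ s with hy
  have hM : Mn f S n *ᵥ y = s := by
    rw [hy, Matrix.mulVec_mulVec, Matrix.mul_nonsing_inv _ (good_iff.1 hS n).isUnit,
      Matrix.one_mulVec]
  have hsupp : ∀ a, n ≤ f a → y a = 0 := by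
    intro a ha
    rw [← Mn_mulVec_ge (S := S) (y := y) ha, hM]
    simp [hs, not_lt.2 ha]
  have h1 : (S *ᵥ y) u = S u v := by
    rw [← Mn_mulVec_lt hsupp huv, hM]; simp [hs, huv]
  have hX : ∀ a, Xm f S a v = (1 : Matrix V V K) a v - y a := by
    intro a
    by_cases ha : f a < n
    · have : a ≠ v := by rintro rfl; exact lt_irrefl _ ha
      simp only [Xm, Matrix.of_apply, ← hn, ha, if_true, Matrix.one_apply, this, if_false, hy, hs]
      simp
    · rw [hsupp a (not_lt.1 ha)]
      simp [Xm, ← hn, ha]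
  rw [Matrix.mul_apply]
  simp only [hX, mul_sub, Finset.sum_sub_distrib]
  rw [show ∑ x, S u x * y x = (S *ᵥ y) u from rfl, h1]
  simp [Matrix.one_apply]

theorem Xm_unique {S Y : Matrix V V K} (hf : Function.Injective f) (hS : Good f S)
    (hY : UT f Y) (h : ∀ u v, f u < f v → (S * Y) u v = 0) : Xm f S = Y := by
  ext a v
  have := hS (f v) (fun a => Xm f S a v - Y a v) ?_ ?_
  · exact sub_eq_zero.1 (congrFun this a)
  · intro a ha
    rcases ha.lt_or_eq with h' | h'
    · rw [(UT_Xm hf S).2 _ _ h', hY.2 _ _ h', sub_zero]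
    · rw [← hf h', (UT_Xm hf S).1, hY.1, sub_self]
  · intro u hu
    have h1 := mul_Xm hf hS hu
    have h2 := h u v hu
    rw [Matrix.mul_apply] at h1 h2
    simp only [Matrix.mulVec, dotProduct, mul_sub, Finset.sum_sub_distrib, h1, h2, sub_zero]

theorem Xm_diag {S : Matrix V V K} (hf : Function.Injective f) (hS : Good f S) (hs : S.IsSymm) :
    (Xm f S)ᵀ * S * Xm f S = Matrix.diagonal (dm f S) := by
  have hup : ∀ u v, f u ≤ f v →
      ((Xm f S)ᵀ * S * Xm f S) u v = Matrix.diagonal (dm f S) u v := by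
    intro u v huv
    rw [Matrix.mul_assoc, Matrix.mul_apply]
    rcases huv.lt_or_eq with h | h
    · rw [Matrix.diagonal_apply_ne _ (by rintro rfl; exact lt_irrefl _ h)]
      apply Finset.sum_eq_zero
      intro w _
      by_cases hw : f u < f w
      · simp [Matrix.transpose_apply, (UT_Xm hf S).2 _ _ hw]
      · rw [mul_Xm hf hS (by omega : f w < f v), mul_zero]
    · have := hf h; subst this
      rw [Matrix.diagonal_apply_eq, Finset.sum_eq_single u]
      · simp [(UT_Xm hf S).1, dm]
      · intro w _ hw
        rcases lt_or_gt_of_ne (fun e => hw (hf e)) with h' | h'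
        · rw [mul_Xm hf hS h', mul_zero]
        · simp [Matrix.transpose_apply, (UT_Xm hf S).2 _ _ h']
      · simp
  have hsym : ((Xm f S)ᵀ * S * Xm f S)ᵀ = (Xm f S)ᵀ * S * Xm f S := by
    rw [Matrix.transpose_mul, Matrix.transpose_mul, hs.eq, Matrix.transpose_transpose,
      Matrix.mul_assoc]
  ext u v
  rcases le_total (f u) (f v) with h | h
  · exact hup u v h
  · rw [← hsym, Matrix.transpose_apply, hup v u h, ← Matrix.transpose_apply (Matrix.diagonal _),
      Matrix.diagonal_transpose]

/-- Reconstruct a matrix from the triangular decomposition. -/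
noncomputable def recon (X : Matrix V V K) (d : V → K) : Matrix V V K :=
  (X⁻¹)ᵀ * Matrix.diagonal d * X⁻¹

theorem recon_eq {S : Matrix V V K} (hf : Function.Injective f) (hS : Good f S) (hs : S.IsSymm) :
    recon (Xm f S) (dm f S) = S := by
  have hu := (UT_Xm hf S).isUnit hf
  have hu' : IsUnit ((Xm f S)ᵀ).det := by rwa [Matrix.det_transpose]
  rw [recon, ← Xm_diag hf hS hs, Matrix.transpose_nonsing_inv]
  rw [Matrix.mul_assoc, Matrix.mul_nonsing_inv_cancel_right _ _ hu,
    Matrix.nonsing_inv_mul_cancel_left _ _ hu']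

theorem good_congr {S A : Matrix V V K} (hf : Function.Injective f) (hS : Good f S) (hA : UT f A) :
    Good f (Aᵀ * S * A) := by
  intro n y hy h
  have hAy : ∀ a, n ≤ f a → (A *ᵥ y) a = 0 := by
    intro a ha
    apply Finset.sum_eq_zero
    intro w _
    by_cases hw : n ≤ f w
    · simp [hy w hw]
    · simp [hA.2 a w (by omega)]
  have h0 : A *ᵥ y = 0 := by
    apply hS n _ hAy
    intro u hu
    have hz : S *ᵥ (A *ᵥ y) = (A⁻¹)ᵀ *ᵥ ((Aᵀ * S * A) *ᵥ y) := by
      have hu' : IsUnit (Aᵀ).det := by rw [Matrix.det_transpose]; exact hA.isUnit hf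
      rw [Matrix.mulVec_mulVec, Matrix.mulVec_mulVec, Matrix.transpose_nonsing_inv,
        Matrix.mul_assoc, Matrix.nonsing_inv_mul_cancel_left _ _ hu']
    rw [hz]
    apply Finset.sum_eq_zero
    intro w _
    by_cases hw : f w < n
    · rw [h w hw, mul_zero]
    · simp only [Matrix.transpose_apply]
      rw [(hA.inv hf).2 _ _ (by omega), zero_mul]
  have : y = A⁻¹ *ᵥ (A *ᵥ y) := by
    rw [Matrix.mulVec_mulVec, Matrix.nonsing_inv_mul _ (hA.isUnit hf), Matrix.one_mulVec]
  rw [this, h0, Matrix.mulVec_zero]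

theorem good_phi {L O : Matrix V V K} (hf : Function.Injective f) (hL : UT f (1 - L))
    (hO : Good f O) : Good f (MixedGraph.phi L O) :=
  good_congr hf hO (hL.inv hf)

theorem good_of_phi {L O : Matrix V V K} (hf : Function.Injective f) (hL : UT f (1 - L))
    (h : Good f (MixedGraph.phi L O)) : Good f O := by
  have := good_congr hf h hL
  have hu' : IsUnit ((1 - L)ᵀ).det := by rw [Matrix.det_transpose]; exact hL.isUnit hf
  rwa [MixedGraph.phi, Matrix.transpose_nonsing_inv, Matrix.mul_assoc _ _ ((1 - L)⁻¹),
    Matrix.mul_nonsing_inv_cancel_left _ _ hu', Matrix.nonsing_inv_mul_cancel_right _ _ (hL.isUnit hf)] at this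

theorem phi_mul {L O U : Matrix V V K} (hf : Function.Injective f) (hL : UT f (1 - L)) :
    MixedGraph.phi L O * ((1 - L) * U) = ((1 - L)⁻¹)ᵀ * (O * U) := by
  rw [MixedGraph.phi, ← Matrix.mul_assoc, Matrix.nonsing_inv_mul_cancel_right _ _ (hL.isUnit hf),
    Matrix.mul_assoc]

theorem Xm_phi {L O : Matrix V V K} (hf : Function.Injective f) (hL : UT f (1 - L))
    (hO : Good f O) : Xm f (MixedGraph.phi L O) = (1 - L) * Xm f O := by
  apply Xm_unique hf (good_phi hf hL hO) (hL.mul hf (UT_Xm hf O))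
  intro u v huv
  rw [phi_mul hf hL, Matrix.mul_apply]
  apply Finset.sum_eq_zero
  intro w _
  by_cases hw : f u < f w
  · rw [Matrix.transpose_apply, (hL.inv hf).2 _ _ hw, zero_mul]
  · rw [mul_Xm hf hO (by omega), mul_zero]

theorem dm_phi {L O : Matrix V V K} (hf : Function.Injective f) (hL : UT f (1 - L))
    (hO : Good f O) : dm f (MixedGraph.phi L O) = dm f O := by
  funext v
  rw [dm, Xm_phi hf hL hO, phi_mul hf hL, Matrix.mul_apply, Finset.sum_eq_single v]
  · rw [Matrix.transpose_apply, (hL.inv hf).1, one_mul, dm]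
  · intro w _ hw
    rcases lt_or_gt_of_ne (fun e => hw (hf e)) with h' | h'
    · rw [mul_Xm hf hO h', mul_zero]
    · rw [Matrix.transpose_apply, (hL.inv hf).2 _ _ h', zero_mul]
  · simp

theorem phi_symm {L O : Matrix V V K} (h : O.IsSymm) : (MixedGraph.phi L O).IsSymm := by
  unfold Matrix.IsSymm MixedGraph.phi
  rw [Matrix.transpose_mul, Matrix.transpose_mul, h.eq, Matrix.transpose_transpose,
      Matrix.mul_assoc]

end LinAlg

section Real

set_option linter.unusedSectionVars false

variable {V : Type*} [Fintype V] [DecidableEq V] {f : V → ℕ}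

theorem good_of_posDef {S : Matrix V V ℝ} (h : S.PosDef) : Good f S := by
  intro n y hy h0
  by_contra hne
  have := h.dotProduct_mulVec_pos hne
  have h1 : star y ⬝ᵥ S *ᵥ y = 0 := by
    apply Finset.sum_eq_zero
    intro u _
    by_cases hu : f u < n
    · rw [h0 u hu, mul_zero]
    · simp [hy u (not_lt.1 hu)]
  rw [h1] at this
  exact lt_irrefl _ this

theorem posDef_iff (hf : Function.Injective f) {S : Matrix V V ℝ} :
    S.PosDef ↔ S.IsSymm ∧ Good f S ∧ ∀ v, 0 < dm f S v := by
  constructor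
  · intro h
    have hs : S.IsSymm := by
      have := h.isHermitian
      rwa [Matrix.IsHermitian, Matrix.conjTranspose_eq_transpose_of_trivial] at this
    have hg : Good f S := good_of_posDef h
    refine ⟨hs, hg, ?_⟩
    have hu : IsUnit (Xm f S) := (Matrix.isUnit_iff_isUnit_det _).2 ((UT_Xm hf S).isUnit hf)
    have := h.conjTranspose_mul_mul_same (Matrix.mulVec_injective_of_isUnit hu)
    rw [Matrix.conjTranspose_eq_transpose_of_trivial, Xm_diag hf hg hs] at this
    exact Matrix.posDef_diagonal_iff.1 this
  · rintro ⟨hs, hg, hd⟩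
    rw [← recon_eq hf hg hs, recon]
    have hu : IsUnit (Xm f S)⁻¹ := (Matrix.isUnit_iff_isUnit_det _).2
      (((UT_Xm hf S).inv hf).isUnit hf)
    have := (Matrix.PosDef.diagonal hd).conjTranspose_mul_mul_same
      (Matrix.mulVec_injective_of_isUnit hu)
    rwa [Matrix.conjTranspose_eq_transpose_of_trivial] at this

end Real
end MCD

namespace MCD
open MixedGraph

section Comp

set_option linter.unusedSectionVars false
variable {V : Type*} [Fintype V] [DecidableEq V] {K : Type*} [Field K]

/-- Parameters supported on the graph. -/
def Supp (G : MixedGraph V) (θ : Matrix V V K × Matrix V V K) : Prop :=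
  (∀ v w, (v, w) ∉ G.D → θ.1 v w = 0) ∧ θ.2.IsSymm ∧
    ∀ v w, v ≠ w → (v, w) ∉ G.B → θ.2 v w = 0

def Topo (G : MixedGraph V) (f : V → ℕ) : Prop := ∀ a b, (a, b) ∈ G.D → f a < f b

theorem Supp.UT {G : MixedGraph V} {θ : Matrix V V K × Matrix V V K} (h : Supp G θ) {f : V → ℕ}
    (ht : Topo G f) : UT f (1 - θ.1) := by
  constructor
  · intro v
    simp [h.1 v v (G.D_irrefl v)]
  · intro a b hab
    have h1 : a ≠ b := by rintro rfl; exact lt_irrefl _ hab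
    have h2 : (a, b) ∉ G.D := fun h' => lt_asymm hab (ht _ _ h')
    simp [h1, h.1 a b h2]

/-- `η` (parameters of the component) agrees with `θ` on the component. -/
def Compat (G : MixedGraph V) (c : V) (θ : Matrix V V K × Matrix V V K)
    (η : Matrix {x : V // x ∈ G.compV c} {x : V // x ∈ G.compV c} K ×
      Matrix {x : V // x ∈ G.compV c} {x : V // x ∈ G.compV c} K) : Prop :=
  (∀ u v : {x : V // x ∈ G.compV c}, v.1 ∈ G.comp c → η.1 u v = θ.1 u v) ∧
  (∀ u v : {x : V // x ∈ G.compV c}, u.1 ∈ G.comp c → v.1 ∈ G.comp c → η.2 u v = θ.2 u v)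

variable {G : MixedGraph V} {c : V}

theorem comp_closed {a b : V} (h : (a, b) ∈ G.B) : a ∈ G.comp c ↔ b ∈ G.comp c := by
  have key : ∀ x, x ∈ G.comp c ↔ G.bidirConn c x := by
    intro x
    simp [MixedGraph.comp]
  rw [key, key]
  exact ⟨fun h' => h'.tail h, fun h' => h'.tail (G.B_symm _ _ h)⟩

theorem comp_sub {v : V} (h : v ∈ G.comp c) : v ∈ G.compV c :=
  Finset.mem_union_left _ h

theorem pa_sub {u v : V} (h : v ∈ G.comp c) (h' : (u, v) ∈ G.D) : u ∈ G.compV c := by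
  apply Finset.mem_union_right
  rw [Finset.mem_biUnion]
  exact ⟨v, h, by simp [pa, h']⟩

theorem sum_sub {g : V → K} {s : Finset V} (h : ∀ x, x ∉ s → g x = 0) :
    ∑ x : {x : V // x ∈ s}, g x.1 = ∑ x, g x := by
  rw [Finset.sum_coe_sort s g]
  exact Finset.sum_subset (Finset.subset_univ _) (fun x _ hx => h x hx)

variable {θ θ' : Matrix V V K × Matrix V V K}
    {η η' : Matrix {x : V // x ∈ G.compV c} {x : V // x ∈ G.compV c} K ×
      Matrix {x : V // x ∈ G.compV c} {x : V // x ∈ G.compV c} K}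

theorem Supp.block (h : Supp G θ) {u v : V} (huv : ¬ (u ∈ G.comp c ↔ v ∈ G.comp c)) :
    θ.2 u v = 0 := by
  apply h.2.2
  · rintro rfl; exact huv Iff.rfl
  · intro h'; exact huv (comp_closed h')

theorem Supp.par (h : Supp G θ) {u v : V} (hv : v ∈ G.comp c) (hu : u ∉ G.compV c) :
    θ.1 u v = 0 := h.1 _ _ fun h' => hu (pa_sub hv h')

theorem Supp.cL (h : Supp (G.component c) η) {u v : {x : V // x ∈ G.compV c}}
    (hv : v.1 ∉ G.comp c) : η.1 u v = 0 := by
  apply h.1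
  simp [component, hv]

theorem Supp.cO (h : Supp (G.component c) η) {u v : {x : V // x ∈ G.compV c}}
    (hv : v.1 ∉ G.comp c) (huv : u ≠ v) : η.2 u v = 0 := by
  apply h.2.2 _ _ huv
  simp [component, hv]

theorem Supp.cO' (h : Supp (G.component c) η) {u v : {x : V // x ∈ G.compV c}}
    (hv : u.1 ∉ G.comp c) (huv : u ≠ v) : η.2 u v = 0 := by
  apply h.2.2 _ _ huv
  simp [component, hv]

theorem compat_O (hs : Supp G θ) (h : Supp (G.component c) η) (hc : Compat G c θ η)
    {u v : {x : V // x ∈ G.compV c}} (hv : v.1 ∈ G.comp c) : η.2 u v = θ.2 u v := by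
  by_cases hu : u.1 ∈ G.comp c
  · exact hc.2 u v hu hv
  · rw [hs.block (c := c) (by tauto), h.cO' hu]
    rintro rfl; exact hu hv

theorem topo_comp {f : V → ℕ} (ht : Topo G f) :
    Topo (G.component c) (fun x => f x.1) := by
  intro a b hab
  simp only [component, Finset.mem_filter] at hab
  exact ht _ _ hab.2.1

theorem inj_comp {f : V → ℕ} (hf : Function.Injective f) :
    Function.Injective (fun x : {x : V // x ∈ G.compV c} => f x.1) :=
  fun _ _ h => Subtype.ext (hf h)

variable {f : V → ℕ}

theorem Xm_block (hf : Function.Injective f) (hs : Supp G θ) (hg : Good f θ.2) {u v : V}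
    (huv : ¬ (u ∈ G.comp c ↔ v ∈ G.comp c)) : Xm f θ.2 u v = 0 := by
  have := hg (f v) (fun a => if (a ∈ G.comp c ↔ v ∈ G.comp c) then 0 else Xm f θ.2 a v) ?_ ?_
  · simpa [huv] using congrFun this u
  · intro a ha
    split_ifs with h
    · rfl
    · rcases ha.lt_or_eq with h' | h'
      · rw [(UT_Xm hf _).2 _ _ h']
      · exact absurd (by rw [hf h']) h
  · intro w hw
    by_cases hwv : w ∈ G.comp c ↔ v ∈ G.comp c
    · apply Finset.sum_eq_zero
      intro a _
      simp only
      split_ifs with h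
      · rw [mul_zero]
      · rw [hs.block (c := c) (by tauto), zero_mul]
    · rw [← mul_Xm hf hg hw, Matrix.mul_apply]
      apply Finset.sum_congr rfl
      intro a _
      simp only
      split_ifs with h
      · rw [hs.block (c := c) (u := w) (v := a) (by tauto), zero_mul, zero_mul]
      · rfl

/-- the key computation: `η.2 * Y`. -/
theorem key_mul (hf : Function.Injective f) (hs : Supp G θ) (hg : Good f θ.2)
    (hs' : Supp (G.component c) η) (hc : Compat G c θ η) (u v : {x : V // x ∈ G.compV c}) :
    (η.2 * Matrix.of (fun u v : {x : V // x ∈ G.compV c} =>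
      if v.1 ∈ G.comp c then Xm f θ.2 u.1 v.1 else (1 : Matrix _ _ K) u v)) u v =
    if v.1 ∈ G.comp c then (θ.2 * Xm f θ.2) u.1 v.1 else η.2 u v := by
  rw [Matrix.mul_apply]
  split_ifs with hv
  · rw [Matrix.mul_apply, ← sum_sub (s := G.compV c)]
    · apply Finset.sum_congr rfl
      intro w _
      simp only [Matrix.of_apply, hv, if_true]
      by_cases hw : w.1 ∈ G.comp c
      · rw [compat_O hs hs' hc hw]
      · rw [Xm_block hf hs hg (c := c) (u := w.1) (v := v.1) (by tauto), mul_zero, mul_zero]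
    · intro w hw
      rw [Xm_block hf hs hg (c := c) (u := w) (v := v.1), mul_zero]
      intro h; exact hw (comp_sub (h.2 hv))
  · simp [hv, Matrix.one_apply]

theorem key_good (hs : Supp G θ) (hg : Good f θ.2)
    (hs' : Supp (G.component c) η) (hc : Compat G c θ η)
    (hne : ∀ v : {x : V // x ∈ G.compV c}, v.1 ∉ G.comp c → η.2 v v ≠ 0) :
    Good (fun x => f x.1) η.2 := by
  intro n y hy h
  have h1 := hg n (fun a => if ha : a ∈ G.comp c then y ⟨a, comp_sub ha⟩ else 0) ?_ ?_
  · funext v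
    by_cases hv : v.1 ∈ G.comp c
    · have := congrFun h1 v.1
      simpa [hv] using this
    · by_cases hn : f v.1 < n
      · have := h v hn
        rw [Matrix.mulVec, dotProduct, Finset.sum_eq_single v] at this
        · exact (mul_eq_zero.1 this).resolve_left (hne v hv)
        · intro w _ hw
          rw [hs'.cO' hv (Ne.symm hw), zero_mul]
        · simp
      · exact hy v (not_lt.1 hn)
  · intro a ha
    split_ifs with h'
    · exact hy _ ha
    · rfl
  · intro u hu
    by_cases huc : u ∈ G.comp c
    · refine Eq.trans ?_ (h ⟨u, comp_sub huc⟩ hu)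
      simp only [Matrix.mulVec, dotProduct]
      rw [← sum_sub (s := G.compV c)]
      · apply Finset.sum_congr rfl
        intro w _
        by_cases hw : w.1 ∈ G.comp c
        · simp [hw, compat_O hs hs' hc hw]
        · have : (⟨u, comp_sub huc⟩ : {x : V // x ∈ G.compV c}) ≠ w := by
            rintro rfl; exact hw huc
          simp [hw, hs'.cO hw this]
      · intro w hw
        have : w ∉ G.comp c := fun h => hw (comp_sub h)
        simp [this]
    · apply Finset.sum_eq_zero
      intro a _
      simp only
      split_ifs with ha
      · rw [hs.block (c := c) (by tauto), zero_mul]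
      · rw [mul_zero]

theorem good_extra (hs' : Supp (G.component c) η) (hg' : Good (fun x => f x.1) η.2)
    (v : {x : V // x ∈ G.compV c}) (hv : v.1 ∉ G.comp c) : η.2 v v ≠ 0 := by
  intro h0
  have := hg' (f v.1 + 1) (fun a => if a = v then 1 else 0) ?_ ?_
  · have := congrFun this v
    simp at this
  · intro a ha
    rw [if_neg]
    rintro rfl
    exact absurd ha (Nat.not_succ_le_self _)
  · intro u _
    simp only [Matrix.mulVec, dotProduct, mul_ite, mul_one, mul_zero, Finset.sum_ite_eq',
      Finset.mem_univ, if_true]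
    by_cases huv : u = v
    · rw [huv, h0]
    · exact hs'.cO hv huv

theorem key_Xm (hf : Function.Injective f) (hs : Supp G θ) (hg : Good f θ.2)
    (hs' : Supp (G.component c) η) (hg' : Good (fun x => f x.1) η.2) (hc : Compat G c θ η) :
    Xm (fun x => f x.1) η.2 = Matrix.of (fun u v : {x : V // x ∈ G.compV c} =>
      if v.1 ∈ G.comp c then Xm f θ.2 u.1 v.1 else (1 : Matrix _ _ K) u v) := by
  apply Xm_unique (inj_comp hf) hg'
  · constructor
    · intro v
      simp [(UT_Xm hf _).1]
    · intro a b hab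
      have : a ≠ b := by rintro rfl; exact lt_irrefl _ hab
      simp [(UT_Xm hf θ.2).2 _ _ hab, this]
  · intro u v huv
    rw [key_mul hf hs hg hs' hc]
    split_ifs with h
    · exact mul_Xm hf hg huv
    · exact hs'.cO h (by rintro rfl; exact lt_irrefl _ huv)

theorem key_dm (hf : Function.Injective f) (hs : Supp G θ) (hg : Good f θ.2)
    (hs' : Supp (G.component c) η) (hg' : Good (fun x => f x.1) η.2) (hc : Compat G c θ η)
    (v : {x : V // x ∈ G.compV c}) :
    dm (fun x => f x.1) η.2 v = if v.1 ∈ G.comp c then dm f θ.2 v.1 else η.2 v v := by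
  rw [dm, key_Xm hf hs hg hs' hg' hc, key_mul hf hs hg hs' hc]
  rfl

/-- Lemma K. -/
theorem key_Xm_phi (hf : Function.Injective f) (ht : Topo G f) (hs : Supp G θ) (hg : Good f θ.2)
    (hs' : Supp (G.component c) η) (hg' : Good (fun x => f x.1) η.2) (hc : Compat G c θ η) :
    Xm (fun x => f x.1) (phi η.1 η.2) = Matrix.of (fun u v : {x : V // x ∈ G.compV c} =>
      if v.1 ∈ G.comp c then Xm f (phi θ.1 θ.2) u.1 v.1 else (1 : Matrix _ _ K) u v) := by
  rw [Xm_phi (inj_comp hf) (hs'.UT (topo_comp ht)) hg', Xm_phi hf (hs.UT ht) hg,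
    key_Xm hf hs hg hs' hg' hc]
  ext u v
  rw [Matrix.sub_mul, Matrix.sub_mul, Matrix.one_mul, Matrix.one_mul]
  simp only [Matrix.sub_apply, Matrix.mul_apply, Matrix.of_apply]
  split_ifs with hv
  · refine congrArg (Xm f θ.2 u.1 v.1 - ·) ?_
    rw [← sum_sub (s := G.compV c)]
    · apply Finset.sum_congr rfl
      intro w _
      by_cases hw : w.1 ∈ G.comp c
      · rw [hc.1 _ _ hw]
      · rw [Xm_block hf hs hg (c := c) (u := w.1) (v := v.1) (by tauto), mul_zero, mul_zero]
    · intro w hw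
      rw [Xm_block hf hs hg (c := c) (u := w) (v := v.1), mul_zero]
      intro h; exact hw (comp_sub (h.2 hv))
  · rw [sub_eq_self]
    simp [Matrix.one_apply, hs'.cL hv]

theorem key_Xm_zero (hf : Function.Injective f) (ht : Topo G f) (hs : Supp G θ) (hg : Good f θ.2)
    {u v : V} (hv : v ∈ G.comp c) (hu : u ∉ G.compV c) : Xm f (phi θ.1 θ.2) u v = 0 := by
  rw [Xm_phi hf (hs.UT ht) hg, Matrix.sub_mul, Matrix.one_mul, Matrix.sub_apply, Matrix.mul_apply,
    Xm_block hf hs hg (c := c) (fun h => hu (comp_sub (h.2 hv))), zero_sub, neg_eq_zero]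
  apply Finset.sum_eq_zero
  intro w _
  by_cases hw : w ∈ G.comp c
  · rw [hs.par hw hu, zero_mul]
  · rw [Xm_block hf hs hg (c := c) (by tauto), mul_zero]

theorem key_dm_phi (hf : Function.Injective f) (ht : Topo G f) (hs : Supp G θ) (hg : Good f θ.2)
    (hs' : Supp (G.component c) η) (hg' : Good (fun x => f x.1) η.2) (hc : Compat G c θ η)
    (v : {x : V // x ∈ G.compV c}) :
    dm (fun x => f x.1) (phi η.1 η.2) v =
      if v.1 ∈ G.comp c then dm f (phi θ.1 θ.2) v.1 else η.2 v v := by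
  rw [dm_phi (inj_comp hf) (hs'.UT (topo_comp ht)) hg', dm_phi hf (hs.UT ht) hg,
    key_dm hf hs hg hs' hg' hc]

end Comp
end MCD

namespace MCD
open MixedGraph

section Glue

set_option linter.unusedSectionVars false
variable {V : Type*} [Fintype V] [DecidableEq V] {K : Type*} [Field K]

/-- Parameter pairs of the component of `c`. -/
abbrev CP (K : Type*) (G : MixedGraph V) (c : V) :=
  Matrix {x : V // x ∈ G.compV c} {x : V // x ∈ G.compV c} K ×
      Matrix {x : V // x ∈ G.compV c} {x : V // x ∈ G.compV c} K

/-- Projection onto the component, the remaining parameters taken from `ref`. -/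
noncomputable def proj (G : MixedGraph V) (c : V) (ref : CP K G c)
    (θ : Matrix V V K × Matrix V V K) : CP K G c :=
  (Matrix.of fun u v => if v.1 ∈ G.comp c then θ.1 u.1 v.1 else ref.1 u v,
   Matrix.of fun u v => if u.1 ∈ G.comp c ∧ v.1 ∈ G.comp c then θ.2 u.1 v.1 else ref.2 u v)

/-- Extension by zero. -/
noncomputable def ext0 {s : Finset V} (M : Matrix {x : V // x ∈ s} {x : V // x ∈ s} K) (u v : V) :
    K := if h : u ∈ s ∧ v ∈ s then M ⟨u, h.1⟩ ⟨v, h.2⟩ else 0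

theorem ext0_coe {s : Finset V} (M : Matrix {x : V // x ∈ s} {x : V // x ∈ s} K)
    (u v : {x : V // x ∈ s}) : ext0 M u.1 v.1 = M u v := by
  simp [ext0, u.2, v.2]

theorem ext0_mem {s : Finset V} (M : Matrix {x : V // x ∈ s} {x : V // x ∈ s} K)
    {u v : V} (hu : u ∈ s) (hv : v ∈ s) : ext0 M u v = M ⟨u, hu⟩ ⟨v, hv⟩ := by
  simp [ext0, hu, hv]

variable {G : MixedGraph V} {k : ℕ} {rep : Fin k → V}

/-- Assemble component parameters. -/
noncomputable def asm (J : V → Fin k) (η : ∀ j, CP K G (rep j)) :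
    Matrix V V K × Matrix V V K :=
  (Matrix.of fun u v => ext0 (η (J v)).1 u v,
   Matrix.of fun u v => if J u = J v then ext0 (η (J v)).2 u v else 0)

theorem proj_supp {c : V} {ref : CP K G c} {θ : Matrix V V K × Matrix V V K}
    (hr : Supp (G.component c) ref) (hs : Supp G θ) :
    Supp (G.component c) (proj G c ref θ) := by
  refine ⟨?_, ?_, ?_⟩
  · intro v w h
    simp only [proj, Matrix.of_apply]
    split_ifs with hw
    · apply hs.1
      simpa [component, hw] using h
    · exact hr.1 _ _ h
  · ext u v
    simp only [proj, Matrix.of_apply, Matrix.transpose_apply, and_comm, hs.2.1.apply, hr.2.1.apply]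
  · intro v w hvw h
    simp only [proj, Matrix.of_apply]
    split_ifs with hw
    · apply hs.2.2
      · exact fun e => hvw (Subtype.ext e)
      · simpa [component, hw] using h
    · exact hr.2.2 _ _ hvw h

theorem proj_compat {c : V} (ref : CP K G c) (θ : Matrix V V K × Matrix V V K) :
    Compat G c θ (proj G c ref θ) := by
  constructor
  · intro u v hv; simp [proj, hv]
  · intro u v hu hv; simp [proj, hu, hv]

/-- Agreement of the variance parameters outside of the bidirected component. -/
def ExtAgree {c : V} (η η' : CP K G c) : Prop :=
  ∀ v : {x : V // x ∈ G.compV c}, v.1 ∉ G.comp c → η.2 v v = η'.2 v v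

theorem proj_extra {c : V} (ref : CP K G c) (θ : Matrix V V K × Matrix V V K) :
    ExtAgree (proj G c ref θ) ref := by
  intro v hv; simp [proj, hv]

section

variable {J : V → Fin k} (hJ : ∀ v j, v ∈ G.comp (rep j) ↔ J v = j)

theorem asm_supp (hJ : ∀ v j, v ∈ G.comp (rep j) ↔ J v = j) {η : ∀ j, CP K G (rep j)}
    (h : ∀ j, Supp (G.component (rep j)) (η j)) : Supp G (asm J η) := by
  have hm : ∀ v, v ∈ G.compV (rep (J v)) := fun v => comp_sub ((hJ v _).2 rfl)
  refine ⟨?_, ?_, ?_⟩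
  · intro v w hvw
    simp only [asm, Matrix.of_apply, ext0]
    split_ifs with h'
    · apply (h _).1
      simp [component, hvw]
    · rfl
  · ext u v
    simp only [asm, Matrix.of_apply, Matrix.transpose_apply]
    by_cases huv : J u = J v
    · have hu : u ∈ G.compV (rep (J v)) := huv ▸ hm u
      rw [if_pos huv, if_pos huv.symm, huv, ext0_mem _ hu (hm v), ext0_mem _ (hm v) hu,
        (h _).2.1.apply]
    · rw [if_neg huv, if_neg (Ne.symm huv)]
  · intro v w hvw hB
    simp only [asm, Matrix.of_apply, ext0]
    split_ifs with h' h''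
    · apply (h _).2.2
      · simpa using hvw
      · simp [component, hB]
    · rfl
    · rfl

theorem asm_compat (hJ : ∀ v j, v ∈ G.comp (rep j) ↔ J v = j) (η : ∀ j, CP K G (rep j))
    (j : Fin k) : Compat G (rep j) (asm J η) (η j) := by
  constructor
  · intro u v hv
    simp only [asm, Matrix.of_apply]
    rw [(hJ _ _).1 hv, ext0_coe]
  · intro u v hu hv
    have hu := (hJ _ _).1 hu
    have hv := (hJ _ _).1 hv
    simp only [asm, Matrix.of_apply]
    rw [hu, hv, if_pos rfl, ext0_coe]

theorem glob_good {f : V → ℕ} {θ : Matrix V V K × Matrix V V K}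
    (hJ : ∀ v j, v ∈ G.comp (rep j) ↔ J v = j) {η : ∀ j, CP K G (rep j)}
    (hs : Supp G θ) (h : ∀ j, Supp (G.component (rep j)) (η j))
    (hc : ∀ j, Compat G (rep j) θ (η j))
    (hg : ∀ j, Good (fun x => f x.1) (η j).2) : Good f θ.2 := by
  intro n y hy h0
  have key : ∀ j, (fun a : {x : V // x ∈ G.compV (rep j)} =>
      if a.1 ∈ G.comp (rep j) then y a.1 else 0) = 0 := by
    intro j
    apply hg j n
    · intro a ha
      split_ifs
      · exact hy _ ha
      · rfl
    · intro u hu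
      by_cases huc : u.1 ∈ G.comp (rep j)
      · refine Eq.trans ?_ (h0 u.1 hu)
        simp only [Matrix.mulVec, dotProduct]
        rw [← sum_sub (s := G.compV (rep j))]
        · apply Finset.sum_congr rfl
          intro w _
          by_cases hw : w.1 ∈ G.comp (rep j)
          · simp [hw, (hc j).2 _ _ huc hw]
          · simp [hw, hs.block (c := rep j) (u := u.1) (v := w.1) (by tauto)]
        · intro w hw
          rw [hs.block (c := rep j) (u := u.1) (v := w), zero_mul]
          exact fun e => hw (comp_sub (e.1 huc))
      · apply Finset.sum_eq_zero
        intro a _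
        by_cases ha : a.1 ∈ G.comp (rep j)
        · have h1 : (η j).2 u a = 0 := (h j).cO' huc (by rintro rfl; exact huc ha)
          simp only [h1, zero_mul]
        · simp [ha]
  funext v
  have hv : v ∈ G.comp (rep (J v)) := (hJ v _).2 rfl
  have := congrFun (key (J v)) ⟨v, comp_sub hv⟩
  simpa [hv] using this

theorem comp_unique {c : V} {θ : Matrix V V K × Matrix V V K} {η η' : CP K G c}
    (h : Supp (G.component c) η) (h' : Supp (G.component c) η')
    (hc : Compat G c θ η) (hc' : Compat G c θ η') (he : ExtAgree η η') : η = η' := by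
  refine Prod.ext ?_ ?_
  · ext u v
    by_cases hv : v.1 ∈ G.comp c
    · rw [hc.1 u v hv, hc'.1 u v hv]
    · rw [h.cL hv, h'.cL hv]
  · ext u v
    by_cases hv : v.1 ∈ G.comp c
    · by_cases hu : u.1 ∈ G.comp c
      · rw [hc.2 u v hu hv, hc'.2 u v hu hv]
      · have : u ≠ v := by rintro rfl; exact hu hv
        rw [h.cO' hu this, h'.cO' hu this]
    · by_cases huv : u = v
      · subst huv; exact he u hv
      · rw [h.cO hv huv, h'.cO hv huv]

theorem glob_unique (hJ : ∀ v j, v ∈ G.comp (rep j) ↔ J v = j)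
    {θ θ' : Matrix V V K × Matrix V V K} {η : ∀ j, CP K G (rep j)}
    (h : Supp G θ) (h' : Supp G θ') (hc : ∀ j, Compat G (rep j) θ (η j))
    (hc' : ∀ j, Compat G (rep j) θ' (η j)) : θ = θ' := by
  have hm : ∀ v, v ∈ G.comp (rep (J v)) := fun v => (hJ v _).2 rfl
  refine Prod.ext ?_ ?_
  · ext u v
    by_cases hu : u ∈ G.compV (rep (J v))
    · have h1 := (hc (J v)).1 ⟨u, hu⟩ ⟨v, comp_sub (hm v)⟩ (hm v)
      have h2 := (hc' (J v)).1 ⟨u, hu⟩ ⟨v, comp_sub (hm v)⟩ (hm v)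
      exact h1.symm.trans h2
    · rw [h.par (hm v) hu, h'.par (hm v) hu]
  · ext u v
    by_cases hu : u ∈ G.comp (rep (J v))
    · have h1 := (hc (J v)).2 ⟨u, comp_sub hu⟩ ⟨v, comp_sub (hm v)⟩ hu (hm v)
      have h2 := (hc' (J v)).2 ⟨u, comp_sub hu⟩ ⟨v, comp_sub (hm v)⟩ hu (hm v)
      exact h1.symm.trans h2
    · have hm' := hm v
      rw [h.block (c := rep (J v)) (by tauto), h'.block (c := rep (J v)) (by tauto)]

theorem phi_comp_of {f : V → ℕ} (hf : Function.Injective f) (ht : Topo G f) {c : V}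
    {θ θ' : Matrix V V K × Matrix V V K} {η η' : CP K G c}
    (hs : Supp G θ) (hg : Good f θ.2) (hs' : Supp G θ') (hg' : Good f θ'.2)
    (h : Supp (G.component c) η) (hgη : Good (fun x => f x.1) η.2)
    (h' : Supp (G.component c) η') (hgη' : Good (fun x => f x.1) η'.2)
    (hc : Compat G c θ η) (hc' : Compat G c θ' η') (he : ExtAgree η η')
    (hφ : phi θ.1 θ.2 = phi θ'.1 θ'.2) : phi η.1 η.2 = phi η'.1 η'.2 := by
  have e1 := recon_eq (inj_comp hf) (good_phi (inj_comp hf) (h.UT (topo_comp ht)) hgη)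
    (phi_symm h.2.1)
  have e2 := recon_eq (inj_comp hf) (good_phi (inj_comp hf) (h'.UT (topo_comp ht)) hgη')
    (phi_symm h'.2.1)
  have e3 : Xm (fun x => f x.1) (phi η.1 η.2) = Xm (fun x => f x.1) (phi η'.1 η'.2) := by
    rw [key_Xm_phi hf ht hs hg h hgη hc, key_Xm_phi hf ht hs' hg' h' hgη' hc', hφ]
  have e4 : dm (fun x => f x.1) (phi η.1 η.2) = dm (fun x => f x.1) (phi η'.1 η'.2) := by
    funext v
    rw [key_dm_phi hf ht hs hg h hgη hc, key_dm_phi hf ht hs' hg' h' hgη' hc', hφ]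
    split_ifs with hv
    · rfl
    · exact he v hv
  rw [← e1, ← e2, e3, e4]

theorem phi_of_comp {f : V → ℕ} (hf : Function.Injective f) (ht : Topo G f)
    (hJ : ∀ v j, v ∈ G.comp (rep j) ↔ J v = j)
    {θ θ' : Matrix V V K × Matrix V V K} {η η' : ∀ j, CP K G (rep j)}
    (hs : Supp G θ) (hg : Good f θ.2) (hs' : Supp G θ') (hg' : Good f θ'.2)
    (h : ∀ j, Supp (G.component (rep j)) (η j)) (hgη : ∀ j, Good (fun x => f x.1) (η j).2)
    (h' : ∀ j, Supp (G.component (rep j)) (η' j)) (hgη' : ∀ j, Good (fun x => f x.1) (η' j).2)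
    (hc : ∀ j, Compat G (rep j) θ (η j)) (hc' : ∀ j, Compat G (rep j) θ' (η' j))
    (hφ : ∀ j, phi (η j).1 (η j).2 = phi (η' j).1 (η' j).2) : phi θ.1 θ.2 = phi θ'.1 θ'.2 := by
  have hm : ∀ v, v ∈ G.comp (rep (J v)) := fun v => (hJ v _).2 rfl
  rw [← recon_eq hf (good_phi hf (hs.UT ht) hg) (phi_symm hs.2.1),
    ← recon_eq hf (good_phi hf (hs'.UT ht) hg') (phi_symm hs'.2.1)]
  congr 1
  · ext u v
    by_cases hu : u ∈ G.compV (rep (J v))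
    · have h1 := key_Xm_phi hf ht hs hg (h (J v)) (hgη _) (hc _)
      have h2 := key_Xm_phi hf ht hs' hg' (h' (J v)) (hgη' _) (hc' _)
      rw [hφ] at h1
      have := congrFun (congrFun (h1.symm.trans h2) ⟨u, hu⟩) ⟨v, comp_sub (hm v)⟩
      simpa [hm v] using this
    · rw [key_Xm_zero hf ht hs hg (hm v) hu, key_Xm_zero hf ht hs' hg' (hm v) hu]
  · funext v
    have h1 := key_dm_phi hf ht hs hg (h (J v)) (hgη _) (hc _) ⟨v, comp_sub (hm v)⟩
    have h2 := key_dm_phi hf ht hs' hg' (h' (J v)) (hgη' _) (hc' _) ⟨v, comp_sub (hm v)⟩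
    rw [hφ] at h1
    simpa [hm v] using h1.symm.trans h2

theorem dm_extra {f : V → ℕ} (hf : Function.Injective f) {c : V} {η : CP K G c}
    (h : Supp (G.component c) η) (v : {x : V // x ∈ G.compV c}) (hv : v.1 ∉ G.comp c) :
    dm (fun x => f x.1) η.2 v = η.2 v v := by
  rw [dm, Matrix.mul_apply, Finset.sum_eq_single v]
  · rw [(UT_Xm (inj_comp hf) _).1, mul_one]
  · intro w _ hw
    rw [h.cO' hv (Ne.symm hw), zero_mul]
  · simp

theorem extra_of_phi {f : V → ℕ} (hf : Function.Injective f) (ht : Topo G f) {c : V}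
    {η η' : CP K G c}
    (h : Supp (G.component c) η) (hgη : Good (fun x => f x.1) η.2)
    (h' : Supp (G.component c) η') (hgη' : Good (fun x => f x.1) η'.2)
    (hφ : phi η.1 η.2 = phi η'.1 η'.2) : ExtAgree η η' := by
  intro v hv
  rw [← dm_extra hf h v hv, ← dm_extra hf h' v hv,
    ← dm_phi (inj_comp hf) (h.UT (topo_comp ht)) hgη,
    ← dm_phi (inj_comp hf) (h'.UT (topo_comp ht)) hgη', hφ]

end

/-- The fiber of `phi` in `S` through `θ`. -/
def fib {W : Type*} [Fintype W] [DecidableEq W] (S : Set (Matrix W W K × Matrix W W K))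
    (θ : Matrix W W K × Matrix W W K) : Set (Matrix W W K × Matrix W W K) :=
  {θ' ∈ S | phi θ'.1 θ'.2 = phi θ.1 θ.2}

/-- Compatible choice of parameter spaces for the graph and its components. -/
structure Spaces (G : MixedGraph V) (f : V → ℕ) (rep : Fin k → V) (J : V → Fin k)
    (S0 : Set (Matrix V V K × Matrix V V K)) (S : ∀ j, Set (CP K G (rep j))) : Prop where
  supp0 : ∀ θ ∈ S0, Supp G θ
  good0 : ∀ θ ∈ S0, Good f θ.2
  supp : ∀ j, ∀ η ∈ S j, Supp (G.component (rep j)) η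
  good : ∀ j, ∀ η ∈ S j, Good (fun x => f x.1) η.2
  proj : ∀ j, ∀ η ∈ S j, ∀ θ ∈ S0, proj G (rep j) η θ ∈ S j
  asm : ∀ η : (∀ j, CP K G (rep j)), (∀ j, η j ∈ S j) → asm J η ∈ S0

variable {J : V → Fin k} {f : V → ℕ} {S0 : Set (Matrix V V K × Matrix V V K)}
  {S : ∀ j, Set (CP K G (rep j))}

theorem Spaces.asm_proj (H : Spaces G f rep J S0 S)
    (hJ : ∀ v j, v ∈ G.comp (rep j) ↔ J v = j)
    {θ : Matrix V V K × Matrix V V K} (hθ : θ ∈ S0) {r : ∀ j, CP K G (rep j)}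
    (hr : ∀ j, r j ∈ S j) : MCD.asm J (fun j => MCD.proj G (rep j) (r j) θ) = θ :=
  glob_unique hJ (H.supp0 _ (H.asm _ fun j => H.proj j _ (hr j) θ hθ)) (H.supp0 _ hθ)
    (fun j => asm_compat hJ _ j) (fun j => proj_compat _ _)

theorem Spaces.proj_asm (H : Spaces G f rep J S0 S)
    (hJ : ∀ v j, v ∈ G.comp (rep j) ↔ J v = j)
    {η : ∀ j, CP K G (rep j)} (hη : ∀ j, η j ∈ S j) (j : Fin k) {r : CP K G (rep j)}
    (hr : r ∈ S j) (he : ExtAgree r (η j)) : MCD.proj G (rep j) r (MCD.asm J η) = η j := by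
  apply comp_unique (H.supp _ _ (H.proj j _ hr _ (H.asm _ hη))) (H.supp _ _ (hη j))
    (proj_compat _ _) (asm_compat hJ _ j)
  intro v hv
  rw [proj_extra r _ v hv, he v hv]

theorem Spaces.phi_iff (H : Spaces G f rep J S0 S) (hf : Function.Injective f) (ht : Topo G f)
    (hJ : ∀ v j, v ∈ G.comp (rep j) ↔ J v = j)
    {θ θ' : Matrix V V K × Matrix V V K} (hθ : θ ∈ S0) (hθ' : θ' ∈ S0) {r : ∀ j, CP K G (rep j)}
    (hr : ∀ j, r j ∈ S j) :
    phi θ.1 θ.2 = phi θ'.1 θ'.2 ↔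
      ∀ j, phi (MCD.proj G (rep j) (r j) θ).1 (MCD.proj G (rep j) (r j) θ).2 =
        phi (MCD.proj G (rep j) (r j) θ').1 (MCD.proj G (rep j) (r j) θ').2 := by
  have h1 := fun j => H.proj j _ (hr j) _ hθ
  have h2 := fun j => H.proj j _ (hr j) _ hθ'
  constructor
  · intro h j
    refine phi_comp_of hf ht (H.supp0 _ hθ) (H.good0 _ hθ) (H.supp0 _ hθ') (H.good0 _ hθ')
      (H.supp _ _ (h1 j)) (H.good _ _ (h1 j)) (H.supp _ _ (h2 j)) (H.good _ _ (h2 j))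
      (proj_compat _ _) (proj_compat _ _) ?_ h
    intro v hv
    rw [proj_extra _ _ v hv, proj_extra _ _ v hv]
  · intro h
    exact phi_of_comp hf ht hJ (H.supp0 _ hθ) (H.good0 _ hθ) (H.supp0 _ hθ') (H.good0 _ hθ')
      (fun j => H.supp _ _ (h1 j)) (fun j => H.good _ _ (h1 j)) (fun j => H.supp _ _ (h2 j))
      (fun j => H.good _ _ (h2 j)) (fun j => proj_compat _ _) (fun j => proj_compat _ _) h

theorem Spaces.fibEquiv (H : Spaces G f rep J S0 S) (hf : Function.Injective f) (ht : Topo G f)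
    (hJ : ∀ v j, v ∈ G.comp (rep j) ↔ J v = j)
    {θ : Matrix V V K × Matrix V V K} (hθ : θ ∈ S0) {r : ∀ j, CP K G (rep j)}
    (hr : ∀ j, r j ∈ S j) :
    Nonempty (fib S0 θ ≃ ∀ j, fib (S j) (MCD.proj G (rep j) (r j) θ)) := by
  have hext : ∀ x : (∀ j, fib (S j) (MCD.proj G (rep j) (r j) θ)), ∀ j,
      ExtAgree (r j) (x j).1 := by
    intro x j v hv
    have hp := H.proj j _ (hr j) _ hθ
    have := extra_of_phi hf ht (H.supp _ _ (x j).2.1) (H.good _ _ (x j).2.1)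
      (H.supp _ _ hp) (H.good _ _ hp) (x j).2.2 v hv
    rw [this, proj_extra _ _ v hv]
  exact ⟨{
    toFun := fun x j => ⟨MCD.proj G (rep j) (r j) x.1, H.proj j _ (hr j) _ x.2.1,
      (H.phi_iff hf ht hJ x.2.1 hθ hr).1 x.2.2 j⟩
    invFun := fun x => ⟨MCD.asm J fun j => (x j).1, H.asm _ fun j => (x j).2.1, by
      rw [H.phi_iff hf ht hJ (H.asm _ fun j => (x j).2.1) hθ hr]
      intro j
      rw [H.proj_asm hJ (fun j => (x j).2.1) j (hr j) (hext x j)]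
      exact (x j).2.2⟩
    left_inv := fun x => Subtype.ext (H.asm_proj hJ x.2.1 hr)
    right_inv := fun x => by
      funext j
      exact Subtype.ext (H.proj_asm hJ (fun j => (x j).2.1) j (hr j) (hext x j)) }⟩

end Glue

section Inst

variable {V : Type*} [Fintype V] [DecidableEq V] {G : MixedGraph V} {k : ℕ} {rep : Fin k → V}
  {J : V → Fin k} {f : V → ℕ}

theorem theta_iff (hf : Function.Injective f) (ht : Topo G f) {θ : Matrix V V ℝ × Matrix V V ℝ} :
    θ ∈ G.Theta ↔ Supp G θ ∧ Good f θ.2 ∧ ∀ v, 0 < dm f θ.2 v := by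
  constructor
  · rintro ⟨⟨h1, _⟩, h3, h4⟩
    obtain ⟨a, b, c⟩ := (posDef_iff hf).1 h3
    exact ⟨⟨h1, a, h4⟩, b, c⟩
  · rintro ⟨h, b, c⟩
    exact ⟨⟨h.1, (h.UT ht).isUnit hf⟩, (posDef_iff hf).2 ⟨h.2.1, b, c⟩, h.2.2⟩

theorem thetaC_iff (hf : Function.Injective f) (ht : Topo G f) {θ : Matrix V V ℂ × Matrix V V ℂ} :
    θ ∈ G.ThetaC ↔ Supp G θ := by
  constructor
  · rintro ⟨⟨h1, _⟩, h3, h4⟩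
    exact ⟨h1, h3, h4⟩
  · intro h
    exact ⟨⟨h.1, (h.UT ht).isUnit hf⟩, h.2.1, h.2.2⟩

theorem spaces_gen {K : Type*} [Field K] (hJ : ∀ v j, v ∈ G.comp (rep j) ↔ J v = j) :
    Spaces (K := K) G f rep J {θ | Supp G θ ∧ Good f θ.2}
      (fun j => {η | Supp (G.component (rep j)) η ∧ Good (fun x => f x.1) η.2}) where
  supp0 := fun θ h => h.1
  good0 := fun θ h => h.2
  supp := fun j η h => h.1
  good := fun j η h => h.2
  proj := by
    intro j η hη θ hθ
    have h1 := proj_supp hη.1 hθ.1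
    refine ⟨h1, key_good hθ.1 hθ.2 h1 (proj_compat _ _) ?_⟩
    intro v hv
    rw [proj_extra _ _ v hv]
    exact good_extra hη.1 hη.2 v hv
  asm := by
    intro η h
    have h1 := asm_supp hJ (fun j => (h j).1)
    exact ⟨h1, glob_good hJ h1 (fun j => (h j).1) (fun j => asm_compat hJ η j) (fun j => (h j).2)⟩

theorem spaces_real (hf : Function.Injective f) (ht : Topo G f)
    (hJ : ∀ v j, v ∈ G.comp (rep j) ↔ J v = j) :
    Spaces G f rep J G.Theta (fun j => (G.component (rep j)).Theta) := by
  have H := spaces_gen (K := ℝ) (f := f) hJ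
  have e0 := fun θ => theta_iff (θ := θ) hf ht
  have e1 := fun j => fun θ => theta_iff (θ := θ) (inj_comp (G := G) (c := rep j) hf) (topo_comp ht)
  refine ⟨fun θ h => ((e0 θ).1 h).1, fun θ h => ((e0 θ).1 h).2.1, fun j θ h => ((e1 j θ).1 h).1,
    fun j θ h => ((e1 j θ).1 h).2.1, ?_, ?_⟩
  · intro j η hη θ hθ
    have a := (e1 j η).1 hη
    have b := (e0 θ).1 hθ
    have c := H.proj j η ⟨a.1, a.2.1⟩ θ ⟨b.1, b.2.1⟩
    refine (e1 j _).2 ⟨c.1, c.2, fun v => ?_⟩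
    rw [key_dm hf b.1 b.2.1 c.1 c.2 (proj_compat _ _)]
    split_ifs with hv
    · exact b.2.2 _
    · rw [proj_extra _ _ v hv, ← dm_extra hf a.1 v hv]
      exact a.2.2 v
  · intro η hη
    have a := fun j => (e1 j _).1 (hη j)
    have c := H.asm η fun j => ⟨(a j).1, (a j).2.1⟩
    refine (e0 _).2 ⟨c.1, c.2, fun v => ?_⟩
    have hv : v ∈ G.comp (rep (J v)) := (hJ v _).2 rfl
    have := key_dm hf c.1 c.2 (a (J v)).1 (a (J v)).2.1 (asm_compat hJ _ _) ⟨v, comp_sub hv⟩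
    rw [if_pos hv] at this
    rw [← this]
    exact (a (J v)).2.2 _

end Inst
end MCD

namespace MCD
open MixedGraph

section Poly

variable {W : Type*} {U : Type*} {K : Type*} [Field K]

/-- Evaluation at a parameter point over a general field. -/
noncomputable def ev (θ : Matrix W W K × Matrix W W K)
    (p : MvPolynomial ((W × W) ⊕ (W × W)) K) : K :=
  MvPolynomial.eval (Sum.elim (fun e => θ.1 e.1 e.2) (fun e => θ.2 e.1 e.2)) p

theorem ev_C (θ : Matrix W W K × Matrix W W K) (c : K) : ev θ (MvPolynomial.C c) = c := by
  simp [ev]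

theorem ev_L (θ : Matrix W W K × Matrix W W K) (u v : W) :
    ev θ (MvPolynomial.X (Sum.inl (u, v))) = θ.1 u v := by
  simp [ev]

theorem ev_O (θ : Matrix W W K × Matrix W W K) (u v : W) :
    ev θ (MvPolynomial.X (Sum.inr (u, v))) = θ.2 u v := by
  simp [ev]

theorem ev_mul (θ : Matrix W W K × Matrix W W K) (p q : MvPolynomial ((W × W) ⊕ (W × W)) K) :
    ev θ (p * q) = ev θ p * ev θ q := by
  simp [ev]

theorem ev_prod {ι : Type*} (θ : Matrix W W K × Matrix W W K) (s : Finset ι)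
    (p : ι → MvPolynomial ((W × W) ⊕ (W × W)) K) :
    ev θ (∏ i ∈ s, p i) = ∏ i ∈ s, ev θ (p i) := by
  simp [ev, map_prod]

/-- Pullback of polynomials along maps with polynomial coordinates. -/
theorem pull (T : Matrix W W K × Matrix W W K → Matrix U U K × Matrix U U K)
    (h1 : ∀ u v, ∃ g, ∀ θ, ev θ g = (T θ).1 u v) (h2 : ∀ u v, ∃ g, ∀ θ, ev θ g = (T θ).2 u v)
    (p : MvPolynomial ((U × U) ⊕ (U × U)) K) : ∃ p', ∀ θ, ev θ p' = ev (T θ) p := by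
  choose g1 hg1 using h1
  choose g2 hg2 using h2
  refine ⟨MvPolynomial.bind₁ (Sum.elim (fun e => g1 e.1 e.2) (fun e => g2 e.1 e.2)) p, ?_⟩
  intro θ
  unfold ev
  rw [← MvPolynomial.coe_aeval_eq_eval, ← MvPolynomial.coe_aeval_eq_eval]
  simp only [RingHom.coe_coe]
  rw [MvPolynomial.aeval_bind₁]
  congr 2
  funext i
  rcases i with i | i
  · have := hg1 i.1 i.2 θ
    simpa [ev, MvPolynomial.aeval_eq_eval] using this
  · have := hg2 i.1 i.2 θ
    simpa [ev, MvPolynomial.aeval_eq_eval] using this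

variable [Fintype W] [DecidableEq W]

/-- Goodness is a polynomial condition. -/
theorem good_poly (f : W → ℕ) : ∃ m : MvPolynomial ((W × W) ⊕ (W × W)) K,
    ∀ θ, ev θ m ≠ 0 ↔ Good f θ.2 := by
  obtain ⟨N, hN⟩ : ∃ N, ∀ v, f v < N := by
    refine ⟨Finset.univ.sup f + 1, fun v => ?_⟩
    exact Nat.lt_succ_of_le (Finset.le_sup (Finset.mem_univ v))
  refine ⟨∏ n ∈ Finset.range (N + 1), Matrix.det (Matrix.of fun a b => if f a < n ∧ f b < n then
    MvPolynomial.X (Sum.inr (a, b)) else MvPolynomial.C ((1 : Matrix W W K) a b)), ?_⟩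
  intro θ
  rw [good_iff_bdd hN, ev_prod, Finset.prod_ne_zero_iff]
  refine forall₂_congr fun n _ => ?_
  have : ev θ (Matrix.det (Matrix.of fun a b => if f a < n ∧ f b < n then
    MvPolynomial.X (Sum.inr (a, b)) else MvPolynomial.C ((1 : Matrix W W K) a b)))
      = (Mn f θ.2 n).det := by
    unfold ev
    rw [RingHom.map_det]
    congr 1
    ext a b
    simp only [RingHom.mapMatrix_apply, Matrix.map_apply, Matrix.of_apply, Mn]
    split_ifs <;> simp
  rw [this]

/-- Two polynomials not vanishing at points `θ₁` and `θ₂` have a common nonvanishing point on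
the line. -/
theorem line [Infinite K] (θ₁ θ₂ : Matrix W W K × Matrix W W K)
    (p q : MvPolynomial ((W × W) ⊕ (W × W)) K) (h1 : ev θ₁ p ≠ 0) (h2 : ev θ₂ q ≠ 0) :
    ∃ t : K, ev (θ₁ + t • (θ₂ - θ₁)) p ≠ 0 ∧ ev (θ₁ + t • (θ₂ - θ₁)) q ≠ 0 := by
  let g : (W × W) ⊕ (W × W) → Polynomial K :=
    Sum.elim (fun e => Polynomial.C (θ₁.1 e.1 e.2) + Polynomial.X * Polynomial.C (θ₂.1 e.1 e.2 - θ₁.1 e.1 e.2))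
      (fun e => Polynomial.C (θ₁.2 e.1 e.2) + Polynomial.X * Polynomial.C (θ₂.2 e.1 e.2 - θ₁.2 e.1 e.2))
  have key : ∀ (r : MvPolynomial ((W × W) ⊕ (W × W)) K) (t : K),
      (MvPolynomial.aeval g r).eval t = ev (θ₁ + t • (θ₂ - θ₁)) r := by
    intro r t
    unfold ev
    rw [← Polynomial.coe_evalRingHom, MvPolynomial.aeval_def, MvPolynomial.hom_eval₂]
    rw [MvPolynomial.eval, MvPolynomial.coe_eval₂Hom]
    congr 1
    · ext; simp
    · funext i
      rcases i with i | i <;> simp [g]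
  have hp : MvPolynomial.aeval g p ≠ 0 := by
    intro h
    have := key p 0
    rw [h] at this
    simp at this
    exact h1 this.symm
  have hq : MvPolynomial.aeval g q ≠ 0 := by
    intro h
    have := key q 1
    rw [h] at this
    simp at this
    exact h2 this.symm
  obtain ⟨t, ht⟩ : ∃ t, (MvPolynomial.aeval g p * MvPolynomial.aeval g q).eval t ≠ 0 := by
    by_contra! h
    exact mul_ne_zero hp hq (Polynomial.funext (by simpa using h))
  rw [Polynomial.eval_mul, key, key] at ht
  exact ⟨t, left_ne_zero_of_mul ht, right_ne_zero_of_mul ht⟩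

end Poly

section Pulls

variable {V : Type*} [Fintype V] [DecidableEq V] {K : Type*} [Field K]
  {G : MixedGraph V} {k : ℕ} {rep : Fin k → V}

theorem pull_proj (c : V) (ref : CP K G c) (p) : ∃ p', ∀ θ, ev θ p' = ev (proj G c ref θ) p := by
  apply pull
  · intro u v
    by_cases hv : v.1 ∈ G.comp c
    · exact ⟨MvPolynomial.X (Sum.inl (u.1, v.1)), fun θ => by rw [ev_L]; simp [proj, hv]⟩
    · exact ⟨MvPolynomial.C (ref.1 u v), fun θ => by rw [ev_C]; simp [proj, hv]⟩
  · intro u v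
    by_cases hv : u.1 ∈ G.comp c ∧ v.1 ∈ G.comp c
    · exact ⟨MvPolynomial.X (Sum.inr (u.1, v.1)), fun θ => by rw [ev_O]; simp [proj, hv]⟩
    · exact ⟨MvPolynomial.C (ref.2 u v), fun θ => by rw [ev_C]; simp [proj, hv]⟩

theorem pull_asm (J : V → Fin k) (η : ∀ j, CP K G (rep j)) (j : Fin k) (p) :
    ∃ p', ∀ θ : CP K G (rep j), ev θ p' = ev (asm J (Function.update η j θ)) p := by
  have key : ∀ (i : Fin k) (u v : V), (∃ g, ∀ θ : CP K G (rep j),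
      ev θ g = ext0 (Function.update η j θ i).1 u v) ∧ (∃ g, ∀ θ : CP K G (rep j),
      ev θ g = ext0 (Function.update η j θ i).2 u v) := by
    intro i u v
    by_cases hi : i = j
    · subst hi
      simp only [Function.update_self]
      by_cases h : u ∈ G.compV (rep i) ∧ v ∈ G.compV (rep i)
      · exact ⟨⟨MvPolynomial.X (Sum.inl (⟨u, h.1⟩, ⟨v, h.2⟩)), fun θ => by
          rw [ev_L, ext0_mem _ h.1 h.2]⟩, ⟨MvPolynomial.X (Sum.inr (⟨u, h.1⟩, ⟨v, h.2⟩)),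
          fun θ => by rw [ev_O, ext0_mem _ h.1 h.2]⟩⟩
      · exact ⟨⟨MvPolynomial.C 0, fun θ => by rw [ev_C, ext0, dif_neg h]⟩,
          ⟨MvPolynomial.C 0, fun θ => by rw [ev_C, ext0, dif_neg h]⟩⟩
    · simp only [Function.update_of_ne hi]
      exact ⟨⟨MvPolynomial.C _, fun θ => ev_C _ _⟩, ⟨MvPolynomial.C _, fun θ => ev_C _ _⟩⟩
  apply pull (fun θ => asm J (Function.update η j θ))
  · intro u v
    exact (key (J v) u v).1
  · intro u v
    by_cases h : J u = J v
    · obtain ⟨g, hg⟩ := (key (J v) u v).2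
      exact ⟨g, fun θ => by rw [hg]; simp [asm, h]⟩
    · exact ⟨MvPolynomial.C 0, fun θ => by rw [ev_C]; simp [asm, h]⟩

end Pulls

section Order

variable {V : Type*} [Fintype V] [DecidableEq V]

theorem exists_topo {G : MixedGraph V} (h : G.Acyclic) :
    ∃ f : V → ℕ, Function.Injective f ∧ Topo G f := by
  let e := Fintype.equivFin V
  let anc : V → Finset V := fun v =>
    Finset.univ.filter fun w => Relation.TransGen (fun a b => (a, b) ∈ G.D) w v
  refine ⟨fun v => (e v : ℕ) + Fintype.card V * (anc v).card, ?_, ?_⟩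
  · intro a b hab
    simp only at hab
    have := congrArg (· % Fintype.card V) hab
    simp only [Nat.add_mul_mod_self_left, Nat.mod_eq_of_lt (e _).2] at this
    exact e.injective (Fin.ext this)
  · intro a b hab
    have hlt : (anc a).card < (anc b).card := by
      apply Finset.card_lt_card
      rw [Finset.ssubset_iff_of_subset]
      · refine ⟨a, ?_, ?_⟩
        · simp only [anc, Finset.mem_filter, Finset.mem_univ, true_and]
          exact Relation.TransGen.single hab
        · simp only [anc, Finset.mem_filter, Finset.mem_univ, true_and]
          exact h a
      · intro w hw
        simp only [anc, Finset.mem_filter, Finset.mem_univ, true_and] at hw ⊢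
        exact hw.tail hab
    have h1 := (e a).2
    have h2 : Fintype.card V * ((anc a).card + 1) ≤ Fintype.card V * (anc b).card :=
      Nat.mul_le_mul_left _ hlt
    simp only
    rw [mul_add] at h2
    omega

end Order

section Ratl

variable {τ : Type*} {W : Type*} [Fintype W] [DecidableEq W] {X : Set τ} {s : τ → Matrix W W ℝ}

/-- `F` is, on `X`, a rational function of the entries of `s`. -/
def RatOn (X : Set τ) (s : τ → Matrix W W ℝ) (F : τ → ℝ) : Prop :=
  ∃ p q : MvPolynomial (W × W) ℝ, ∀ θ ∈ X, evalAtCov (s θ) q ≠ 0 ∧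
    F θ * evalAtCov (s θ) q = evalAtCov (s θ) p

theorem RatOn.const (c : ℝ) : RatOn X s (fun _ => c) :=
  ⟨MvPolynomial.C c, 1, fun θ _ => by simp [evalAtCov]⟩

theorem RatOn.coord (u v : W) : RatOn X s (fun θ => s θ u v) :=
  ⟨MvPolynomial.X (u, v), 1, fun θ _ => by simp [evalAtCov]⟩

theorem RatOn.congr {F F' : τ → ℝ} (h : RatOn X s F) (he : ∀ θ ∈ X, F' θ = F θ) :
    RatOn X s F' := by
  obtain ⟨p, q, h⟩ := h
  exact ⟨p, q, fun θ hθ => by rw [he θ hθ]; exact h θ hθ⟩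

theorem RatOn.mul {F F' : τ → ℝ} (h : RatOn X s F) (h' : RatOn X s F') :
    RatOn X s (fun θ => F θ * F' θ) := by
  obtain ⟨p, q, h⟩ := h
  obtain ⟨p', q', h'⟩ := h'
  refine ⟨p * p', q * q', fun θ hθ => ?_⟩
  obtain ⟨a, b⟩ := h θ hθ
  obtain ⟨a', b'⟩ := h' θ hθ
  simp only [evalAtCov, map_mul] at *
  exact ⟨mul_ne_zero a a', by rw [← b, ← b']; ring⟩

theorem RatOn.add {F F' : τ → ℝ} (h : RatOn X s F) (h' : RatOn X s F') :
    RatOn X s (fun θ => F θ + F' θ) := by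
  obtain ⟨p, q, h⟩ := h
  obtain ⟨p', q', h'⟩ := h'
  refine ⟨p * q' + p' * q, q * q', fun θ hθ => ?_⟩
  obtain ⟨a, b⟩ := h θ hθ
  obtain ⟨a', b'⟩ := h' θ hθ
  simp only [evalAtCov, map_mul, map_add] at *
  exact ⟨mul_ne_zero a a', by rw [← b, ← b']; ring⟩

theorem RatOn.neg {F : τ → ℝ} (h : RatOn X s F) : RatOn X s (fun θ => - F θ) :=
  ((RatOn.const (-1)).mul h).congr fun θ _ => by ring

theorem RatOn.inv {F : τ → ℝ} (h : RatOn X s F) (h0 : ∀ θ ∈ X, F θ ≠ 0) :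
    RatOn X s (fun θ => (F θ)⁻¹) := by
  obtain ⟨p, q, h⟩ := h
  refine ⟨q, p, fun θ hθ => ?_⟩
  obtain ⟨a, b⟩ := h θ hθ
  have := h0 θ hθ
  refine ⟨by rw [← b]; exact mul_ne_zero this a, ?_⟩
  rw [← b, ← mul_assoc, inv_mul_cancel₀ this, one_mul]

theorem RatOn.sum {ι : Type*} (t : Finset ι) {F : ι → τ → ℝ} (h : ∀ i, RatOn X s (F i)) :
    RatOn X s (fun θ => ∑ i ∈ t, F i θ) := by
  induction t using Finset.induction_on with
  | empty => simpa using RatOn.const 0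
  | insert a t ha ih => simpa [Finset.sum_insert ha] using (h a).add ih

theorem RatOn.prod {ι : Type*} (t : Finset ι) {F : ι → τ → ℝ} (h : ∀ i, RatOn X s (F i)) :
    RatOn X s (fun θ => ∏ i ∈ t, F i θ) := by
  induction t using Finset.induction_on with
  | empty => simpa using RatOn.const 1
  | insert a t ha ih => simpa [Finset.prod_insert ha] using (h a).mul ih

theorem RatOn.eval {σ : Type*} {F : σ → τ → ℝ} (h : ∀ i, RatOn X s (F i))
    (p : MvPolynomial σ ℝ) : RatOn X s (fun θ => MvPolynomial.eval (fun i => F i θ) p) := by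
  induction p using MvPolynomial.induction_on with
  | C a => simpa using RatOn.const a
  | add p q hp hq => simpa using hp.add hq
  | mul_X p i hp => simpa using hp.mul (h i)

/-- Composition. -/
theorem RatOn.comp {W' : Type*} {s' : τ → Matrix W' W' ℝ} {F : τ → ℝ}
    (hs : ∀ u v, RatOn X s (fun θ => s' θ u v)) {p q : MvPolynomial (W' × W') ℝ}
    (h : ∀ θ ∈ X, evalAtCov (s' θ) q ≠ 0 ∧ F θ * evalAtCov (s' θ) q = evalAtCov (s' θ) p) :
    RatOn X s F := by
  have hp := RatOn.eval (F := fun (e : W' × W') θ => s' θ e.1 e.2) (fun e => hs e.1 e.2) p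
  have hq := RatOn.eval (F := fun (e : W' × W') θ => s' θ e.1 e.2) (fun e => hs e.1 e.2) q
  refine (hp.mul (hq.inv fun θ hθ => (h θ hθ).1)).congr fun θ hθ => ?_
  obtain ⟨a, b⟩ := h θ hθ
  simp only [evalAtCov] at a b
  rw [← b, mul_assoc, mul_inv_cancel₀ a, mul_one]

section Mat

variable {I : Type*} [Fintype I] [DecidableEq I]

theorem RatOn.det {M : τ → Matrix I I ℝ} (h : ∀ a b, RatOn X s (fun θ => M θ a b)) :
    RatOn X s (fun θ => (M θ).det) := by
  simp only [Matrix.det_apply']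
  exact RatOn.sum _ fun σ => (RatOn.const _).mul (RatOn.prod _ fun i => h _ _)

theorem RatOn.matMul {M M' : τ → Matrix I I ℝ} (h : ∀ a b, RatOn X s (fun θ => M θ a b))
    (h' : ∀ a b, RatOn X s (fun θ => M' θ a b)) (a b : I) :
    RatOn X s (fun θ => (M θ * M' θ) a b) := by
  simp only [Matrix.mul_apply]
  exact RatOn.sum _ fun i => (h _ _).mul (h' _ _)

theorem RatOn.matInv {M : τ → Matrix I I ℝ} (h : ∀ a b, RatOn X s (fun θ => M θ a b))
    (h0 : ∀ θ ∈ X, (M θ).det ≠ 0) (a b : I) : RatOn X s (fun θ => (M θ)⁻¹ a b) := by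
  have hadj : RatOn X s (fun θ => (M θ).adjugate a b) := by
    simp only [Matrix.adjugate_apply]
    apply RatOn.det
    intro c d
    simp only [Matrix.updateRow_apply]
    split_ifs
    · exact RatOn.const _
    · exact h _ _
  refine (((RatOn.det h).inv h0).mul hadj).congr fun θ hθ => ?_
  rw [Matrix.inv_def, Matrix.smul_apply, Ring.inverse_eq_inv, smul_eq_mul]

theorem RatOn.Xm {f : I → ℕ} {M : τ → Matrix I I ℝ} (h : ∀ a b, RatOn X s (fun θ => M θ a b))
    (hg : ∀ θ ∈ X, Good f (M θ)) (a b : I) : RatOn X s (fun θ => Xm f (M θ) a b) := by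
  simp only [MCD.Xm, Matrix.of_apply]
  split_ifs
  · apply RatOn.neg
    simp only [Matrix.mulVec, dotProduct]
    refine RatOn.sum _ fun i => RatOn.mul (RatOn.matInv ?_ ?_ _ _) ?_
    · intro c d
      simp only [Mn, Matrix.of_apply]
      split_ifs
      · exact h _ _
      · exact RatOn.const _
    · exact fun θ hθ => good_iff.1 (hg θ hθ) _
    · split_ifs
      · exact h _ _
      · exact RatOn.const _
  · exact RatOn.const _

theorem RatOn.dm {f : I → ℕ} {M : τ → Matrix I I ℝ} (h : ∀ a b, RatOn X s (fun θ => M θ a b))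
    (hg : ∀ θ ∈ X, Good f (M θ)) (a : I) : RatOn X s (fun θ => dm f (M θ) a) :=
  RatOn.matMul h (RatOn.Xm h hg) a a

theorem RatOn.recon {M : τ → Matrix I I ℝ} {d : τ → I → ℝ}
    (h : ∀ a b, RatOn X s (fun θ => M θ a b)) (hd : ∀ a, RatOn X s (fun θ => d θ a))
    (h0 : ∀ θ ∈ X, (M θ).det ≠ 0) (a b : I) : RatOn X s (fun θ => recon (M θ) (d θ) a b) := by
  have hi := RatOn.matInv h h0
  refine RatOn.matMul (RatOn.matMul (M := fun θ => ((M θ)⁻¹)ᵀ) (fun a b => hi b a) ?_) hi a b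
  intro a b
  by_cases hab : a = b
  · subst hab
    simpa using hd a
  · simpa [Matrix.diagonal_apply_ne _ hab] using RatOn.const 0

/-- A symmetric matrix is rational if its triangular factorization is. -/
theorem RatOn.of_factor {f : I → ℕ} (hf : Function.Injective f) {M : τ → Matrix I I ℝ}
    (hg : ∀ θ ∈ X, Good f (M θ)) (hs : ∀ θ ∈ X, (M θ).IsSymm)
    (h : ∀ a b, RatOn X s (fun θ => MCD.Xm f (M θ) a b)) (hd : ∀ a, RatOn X s (fun θ => MCD.dm f (M θ) a))
    (a b : I) : RatOn X s (fun θ => M θ a b) :=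
  (RatOn.recon h hd (fun θ _ => by rw [(UT_Xm hf _).det_eq hf]; exact one_ne_zero) a b).congr
    fun θ hθ => by rw [recon_eq hf (hg θ hθ) (hs θ hθ)]

end Mat

end Ratl

end MCD

namespace MCD
open MixedGraph

section Char

variable {V : Type*} [Fintype V] [DecidableEq V] (G : MixedGraph V)

theorem ri_iff : G.RationallyIdentifiable ↔ ∃ p, (∃ θ ∈ G.Theta, ev θ p ≠ 0) ∧
    (∀ u v, RatOn {θ | θ ∈ G.Theta ∧ ev θ p ≠ 0} (fun θ => phi θ.1 θ.2) (fun θ => θ.1 u v)) ∧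
    (∀ u v, RatOn {θ | θ ∈ G.Theta ∧ ev θ p ≠ 0} (fun θ => phi θ.1 θ.2) (fun θ => θ.2 u v)) := by
  constructor
  · rintro ⟨_, ⟨p, hp, rfl⟩, P, Q, h⟩
    refine ⟨p, hp, fun u v => ⟨P (Sum.inl (u, v)), Q (Sum.inl (u, v)), fun θ hθ => ?_⟩,
      fun u v => ⟨P (Sum.inr (u, v)), Q (Sum.inr (u, v)), fun θ hθ => ?_⟩⟩
    · have := h θ ⟨hθ.1, fun h => hθ.2 h.2⟩
      exact ⟨this.1 _, this.2.1 u v⟩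
    · have := h θ ⟨hθ.1, fun h => hθ.2 h.2⟩
      exact ⟨this.1 _, this.2.2 u v⟩
  · rintro ⟨p, hp, h1, h2⟩
    choose P1 Q1 h1 using h1
    choose P2 Q2 h2 using h2
    refine ⟨_, ⟨p, hp, rfl⟩, Sum.elim (fun e => P1 e.1 e.2) (fun e => P2 e.1 e.2),
      Sum.elim (fun e => Q1 e.1 e.2) (fun e => Q2 e.1 e.2), fun θ hθ => ?_⟩
    have hX : θ ∈ {θ | θ ∈ G.Theta ∧ ev θ p ≠ 0} := ⟨hθ.1, fun h => hθ.2 ⟨hθ.1, h⟩⟩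
    refine ⟨?_, fun v w => (h1 v w θ hX).2, fun v w => (h2 v w θ hX).2⟩
    rintro (i | i)
    · exact (h1 _ _ θ hX).1
    · exact (h2 _ _ θ hX).1

theorem gi_iff : G.GenericallyIdentifiable ↔ ∃ p, (∃ θ ∈ G.Theta, ev θ p ≠ 0) ∧
    ∀ θ ∈ G.Theta, ev θ p ≠ 0 → ∀ θ' ∈ G.Theta, ev θ' p ≠ 0 →
      phi θ.1 θ.2 = phi θ'.1 θ'.2 → θ = θ' := by
  constructor
  · rintro ⟨_, ⟨p, hp, rfl⟩, h⟩
    refine ⟨p, hp, fun θ h1 h2 θ' h1' h2' he => h ⟨h1, fun h => h2 h.2⟩ ⟨h1', fun h => h2' h.2⟩ he⟩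
  · rintro ⟨p, hp, h⟩
    exact ⟨_, ⟨p, hp, rfl⟩, fun θ h1 θ' h1' he => h θ h1.1 (fun e => h1.2 ⟨h1.1, e⟩)
      θ' h1'.1 (fun e => h1'.2 ⟨h1'.1, e⟩) he⟩

theorem ginf_iff : G.GenInfiniteToOne ↔ ∃ p, (∃ θ ∈ G.Theta, ev θ p ≠ 0) ∧
    ∀ θ ∈ G.Theta, ev θ p ≠ 0 → (fib G.Theta θ).Infinite := by
  constructor
  · rintro ⟨_, ⟨p, hp, rfl⟩, h⟩
    exact ⟨p, hp, fun θ h1 h2 => h θ ⟨h1, fun h => h2 h.2⟩⟩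
  · rintro ⟨p, hp, h⟩
    exact ⟨_, ⟨p, hp, rfl⟩, fun θ h1 => h θ h1.1 (fun e => h1.2 ⟨h1.1, e⟩)⟩

theorem theta_nonempty : ((0, 1) : Matrix V V ℝ × Matrix V V ℝ) ∈ G.Theta := by
  refine ⟨⟨fun _ _ _ => rfl, by simp⟩, Matrix.PosDef.one, fun v w h _ => Matrix.one_apply_ne h⟩

end Char

section Main

variable {V : Type*} [Fintype V] [DecidableEq V] {G : MixedGraph V} {k : ℕ} {rep : Fin k → V}
  {J : V → Fin k} {f : V → ℕ}

section K
variable {K : Type*} [Field K] {S0 : Set (Matrix V V K × Matrix V V K)}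
  {S : ∀ j, Set (CP K G (rep j))}

theorem prodPoly (H : Spaces G f rep J S0 S) (hJ : ∀ v j, v ∈ G.comp (rep j) ↔ J v = j)
    {r : ∀ j, CP K G (rep j)} (hr : ∀ j, r j ∈ S j) (p : ∀ j, MvPolynomial _ K)
    (hp : ∀ j, ev (r j) (p j) ≠ 0) :
    ∃ q, ev (asm J r) q ≠ 0 ∧ ∀ θ, ev θ q ≠ 0 → ∀ j, ev (proj G (rep j) (r j) θ) (p j) ≠ 0 := by
  choose q hq using fun j => pull_proj (rep j) (r j) (p j)
  refine ⟨∏ j, q j, ?_, ?_⟩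
  · rw [ev_prod, Finset.prod_ne_zero_iff]
    intro j _
    rw [hq, H.proj_asm hJ hr j (hr j) (fun _ _ => rfl)]
    exact hp j
  · intro θ h j
    rw [ev_prod, Finset.prod_ne_zero_iff] at h
    rw [← hq]
    exact h j (Finset.mem_univ _)

theorem update_mem {η : ∀ j, CP K G (rep j)} (hη : ∀ j, η j ∈ S j) {j : Fin k}
    {θ : CP K G (rep j)} (hθ : θ ∈ S j) (i : Fin k) : Function.update η j θ i ∈ S i := by
  by_cases h : i = j
  · subst h; simpa using hθ
  · simpa [h] using hη i

end K

theorem gi_mpr (hf : Function.Injective f) (ht : Topo G f)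
    (hJ : ∀ v j, v ∈ G.comp (rep j) ↔ J v = j)
    (h : ∀ j, (G.component (rep j)).GenericallyIdentifiable) : G.GenericallyIdentifiable := by
  have H := spaces_real hf ht hJ
  simp only [gi_iff] at h ⊢
  choose p hr hinj using h
  choose r hp using hr
  obtain ⟨q, hq, hq'⟩ := prodPoly H hJ (fun j => (hp j).1) p (fun j => (hp j).2)
  refine ⟨q, ⟨_, H.asm r fun j => (hp j).1, hq⟩, ?_⟩
  intro θ h1 h2 θ' h1' h2' he
  rw [← H.asm_proj hJ h1 (fun j => (hp j).1), ← H.asm_proj hJ h1' (fun j => (hp j).1)]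
  congr 1
  funext j
  exact hinj j _ (H.proj _ _ (hp j).1 _ h1) (hq' _ h2 j) _ (H.proj _ _ (hp j).1 _ h1')
    (hq' _ h2' j) ((H.phi_iff hf ht hJ h1 h1' fun j => (hp j).1).1 he j)

theorem gi_mp (hf : Function.Injective f) (ht : Topo G f)
    (hJ : ∀ v j, v ∈ G.comp (rep j) ↔ J v = j)
    (h : G.GenericallyIdentifiable) (j : Fin k) :
    (G.component (rep j)).GenericallyIdentifiable := by
  have H := spaces_real hf ht hJ
  rw [gi_iff] at h ⊢
  obtain ⟨p, ⟨θ, hθ, hp⟩, h⟩ := h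
  have hr := fun j => theta_nonempty (G.component (rep j))
  have hη := fun j => H.proj j _ (hr j) _ hθ
  have hasm := H.asm_proj hJ hθ hr
  generalize hd : (fun j => proj G (rep j) (0, 1) θ) = η at hasm
  have hη : ∀ j, η j ∈ (G.component (rep j)).Theta := by rw [← hd]; exact hη
  obtain ⟨q, hq⟩ := pull_asm J η j p
  refine ⟨q, ⟨η j, hη j, by rw [hq, Function.update_eq_self, hasm]; exact hp⟩, ?_⟩
  intro a ha ha' b hb hb' he
  rw [hq] at ha' hb'
  have ua := update_mem hη ha
  have ub := update_mem hη hb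
  have Aa := H.asm _ ua
  have Ab := H.asm _ ub
  have := h _ Aa ha' _ Ab hb' (phi_of_comp hf ht hJ (H.supp0 _ Aa) (H.good0 _ Aa)
    (H.supp0 _ Ab) (H.good0 _ Ab) (fun i => H.supp _ _ (ua i)) (fun i => H.good _ _ (ua i))
    (fun i => H.supp _ _ (ub i)) (fun i => H.good _ _ (ub i)) (asm_compat hJ _) (asm_compat hJ _)
    (fun i => by
      by_cases hi : i = j
      · subst hi; simpa using he
      · simp [hi]))
  have c1 := asm_compat hJ (Function.update η j a) j
  have c2 := asm_compat hJ (Function.update η j b) j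
  rw [Function.update_self] at c1 c2
  rw [← this] at c2
  exact comp_unique (H.supp _ _ ha) (H.supp _ _ hb) c1 c2
    (extra_of_phi hf ht (H.supp _ _ ha) (H.good _ _ ha) (H.supp _ _ hb) (H.good _ _ hb) he)

theorem ginf_mpr (hf : Function.Injective f) (ht : Topo G f)
    (hJ : ∀ v j, v ∈ G.comp (rep j) ↔ J v = j) (j : Fin k)
    (h : (G.component (rep j)).GenInfiniteToOne) : G.GenInfiniteToOne := by
  have H := spaces_real hf ht hJ
  rw [ginf_iff] at h ⊢
  obtain ⟨p, ⟨a, ha, hp⟩, h⟩ := h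
  have hr : ∀ i, Function.update (fun i => ((0, 1) : CP ℝ G (rep i))) j a i ∈
      (G.component (rep i)).Theta :=
    update_mem (fun i => theta_nonempty (G.component (rep i))) ha
  have hrj : Function.update (fun i => ((0, 1) : CP ℝ G (rep i))) j a j = a :=
    Function.update_self ..
  generalize Function.update (fun i => ((0, 1) : CP ℝ G (rep i))) j a = r at hr hrj
  obtain ⟨q, hq⟩ := pull_proj (rep j) (r j) p
  refine ⟨q, ⟨asm J r, H.asm r hr, ?_⟩, ?_⟩
  · rw [hq, H.proj_asm hJ hr j (hr j) (fun _ _ => rfl), hrj]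
    exact hp
  · intro θ hθ hqθ
    rw [hq] at hqθ
    obtain ⟨e⟩ := H.fibEquiv hf ht hJ hθ hr
    have hinf := (h _ (H.proj j _ (hr j) _ hθ) hqθ).to_subtype
    have : ∀ i, Nonempty (fib (G.component (rep i)).Theta (proj G (rep i) (r i) θ)) :=
      fun i => ⟨⟨_, H.proj i _ (hr i) _ hθ, rfl⟩⟩
    have : Infinite (∀ i, fib (G.component (rep i)).Theta (proj G (rep i) (r i) θ)) :=
      Infinite.of_surjective (fun x => x j) (Function.surjective_eval j)
    have : Infinite (fib G.Theta θ) := Infinite.of_injective e.symm e.symm.injective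
    exact Set.infinite_coe_iff.1 this

theorem ginf_mp (hf : Function.Injective f) (ht : Topo G f)
    (hJ : ∀ v j, v ∈ G.comp (rep j) ↔ J v = j) 
    (h : G.GenInfiniteToOne) : ∃ j, (G.component (rep j)).GenInfiniteToOne := by
  have H := spaces_real hf ht hJ
  by_contra! hn
  rw [ginf_iff] at h
  obtain ⟨p, ⟨θ, hθ, hp⟩, h⟩ := h
  have key : ∀ s : Finset (Fin k), ∃ η : ∀ j, CP ℝ G (rep j),
      (∀ j, η j ∈ (G.component (rep j)).Theta) ∧ ev (asm J η) p ≠ 0 ∧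
      ∀ j ∈ s, (fib (G.component (rep j)).Theta (η j)).Finite := by
    intro s
    induction s using Finset.induction_on with
    | empty =>
      have hr := fun j => theta_nonempty (G.component (rep j))
      refine ⟨_, fun j => H.proj j _ (hr j) _ hθ, ?_, by simp⟩
      rw [H.asm_proj hJ hθ hr]
      exact hp
    | insert j s hj ih =>
      obtain ⟨η, hη, h1, h2⟩ := ih
      obtain ⟨q, hq⟩ := pull_asm J η j p
      have := hn j
      rw [ginf_iff] at this
      push Not at this
      obtain ⟨a, ha, hqa, hfin⟩ := this q ⟨η j, hη j, by rw [hq, Function.update_eq_self]; exact h1⟩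
      rw [hq] at hqa
      refine ⟨Function.update η j a, update_mem hη ha, hqa, ?_⟩
      intro i hi
      by_cases hij : i = j
      · subst hij; rw [Function.update_self]; exact hfin
      · rw [Function.update_of_ne hij]
        exact h2 i (by simpa [hij] using hi)
  obtain ⟨η, hη, h1, h2⟩ := key Finset.univ
  have hA := H.asm _ hη
  obtain ⟨e⟩ := H.fibEquiv hf ht hJ hA hη
  have : ∀ j, Finite (fib (G.component (rep j)).Theta (proj G (rep j) (η j) (asm J η))) := by
    intro j
    rw [H.proj_asm hJ hη j (hη j) (fun _ _ => rfl)]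
    exact (h2 j (Finset.mem_univ j)).to_subtype
  have : Finite (fib G.Theta (asm J η)) := Finite.of_equiv _ e.symm
  exact h _ hA h1 (Set.toFinite _)

theorem genH (hf : Function.Injective f) (ht : Topo G f)
    (hJ : ∀ v j, v ∈ G.comp (rep j) ↔ J v = j) (h : Fin k → ℕ)
    (hh : ∀ j, (G.component (rep j)).GenHToOneC (h j)) : G.GenHToOneC (∏ j, h j) := by
  have H := spaces_gen (K := ℂ) (f := f) hJ
  choose p hp hfin using hh
  have e0 := fun θ => thetaC_iff (θ := θ) hf ht
  have e1 := fun j => fun θ => thetaC_iff (θ := θ) (inj_comp (G := G) (c := rep j) hf) (topo_comp ht)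
  have hfib : ∀ θ, Supp G θ → Good f θ.2 → fib G.ThetaC θ =
      fib {θ | Supp G θ ∧ Good f θ.2} θ := by
    intro θ hs hg
    ext θ'
    constructor
    · rintro ⟨a, b⟩
      have a := (e0 _).1 a
      refine ⟨⟨a, good_of_phi hf (a.UT ht) ?_⟩, b⟩
      rw [b]
      exact good_phi hf (hs.UT ht) hg
    · rintro ⟨a, b⟩
      exact ⟨(e0 _).2 a.1, b⟩
  have hfib' : ∀ j, ∀ θ, Supp (G.component (rep j)) θ → Good (fun x => f x.1) θ.2 →
      fib (G.component (rep j)).ThetaC θ =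
      fib {θ | Supp (G.component (rep j)) θ ∧ Good (fun x => f x.1) θ.2} θ := by
    intro j θ hs hg
    ext θ'
    constructor
    · rintro ⟨a, b⟩
      have a := (e1 j _).1 a
      refine ⟨⟨a, good_of_phi (inj_comp hf) (a.UT (topo_comp ht)) ?_⟩, b⟩
      rw [b]
      exact good_phi (inj_comp hf) (hs.UT (topo_comp ht)) hg
    · rintro ⟨a, b⟩
      exact ⟨(e1 j _).2 a.1, b⟩
  have hw : ∀ j, ∃ r : CP ℂ G (rep j), (Supp (G.component (rep j)) r ∧
      Good (fun x => f x.1) r.2) ∧ ev r (p j) ≠ 0 := by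
    intro j
    obtain ⟨a, ha, hpa⟩ := hp j
    have ha := (e1 j _).1 ha
    obtain ⟨m, hm⟩ := good_poly (K := ℂ) (fun x : {x : V // x ∈ G.compV (rep j)} => f x.1)
    have h1 : ev ((0, 1) : CP ℂ G (rep j)) m ≠ 0 := by
      rw [hm, good_iff]
      intro n
      have : Mn (fun x : {x : V // x ∈ G.compV (rep j)} => f x.1)
          (1 : Matrix _ _ ℂ) n = 1 := by
        ext a b; simp [Mn]
      simp only [this, Matrix.det_one]
      exact one_ne_zero
    obtain ⟨t, ht1, ht2⟩ := line a (0, 1) (p j) m hpa h1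
    refine ⟨_, ⟨?_, (hm _).1 ht2⟩, ht1⟩
    refine ⟨?_, ?_, ?_⟩
    · intro v w hvw
      simp [ha.1 v w hvw]
    · have := ha.2.1
      simp only [Matrix.IsSymm] at this ⊢
      simp [this]
    · intro v w hne hvw
      simp [ha.2.2 v w hne hvw, Matrix.one_apply_ne hne]
  choose r hr hpr using hw
  obtain ⟨q, hq, hq'⟩ := prodPoly H hJ hr p hpr
  obtain ⟨m, hm⟩ := good_poly (K := ℂ) f
  have hA := H.asm r hr
  refine ⟨m * q, ⟨asm J r, (e0 _).2 hA.1, ?_⟩, ?_⟩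
  · change ev _ _ ≠ 0
    rw [ev_mul]
    exact mul_ne_zero ((hm _).2 hA.2) hq
  · intro θ hθ hmq
    change ev _ _ ≠ 0 at hmq
    rw [ev_mul] at hmq
    have hs := (e0 _).1 hθ
    have hg := (hm _).1 (left_ne_zero_of_mul hmq)
    have hqθ := hq' θ (right_ne_zero_of_mul hmq)
    change (fib G.ThetaC θ).Finite ∧ Nat.card (fib G.ThetaC θ) = _
    obtain ⟨e⟩ := H.fibEquiv hf ht hJ (θ := θ) ⟨hs, hg⟩ hr
    rw [← hfib θ hs hg] at e
    have hP := fun j => H.proj j _ (hr j) θ ⟨hs, hg⟩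
    have hj : ∀ j, Finite (fib {θ | Supp (G.component (rep j)) θ ∧ Good (fun x => f x.1) θ.2}
        (proj G (rep j) (r j) θ)) ∧ Nat.card (fib {θ | Supp (G.component (rep j)) θ ∧
          Good (fun x => f x.1) θ.2} (proj G (rep j) (r j) θ)) = h j := by
      intro j
      rw [← hfib' j _ (hP j).1 (hP j).2]
      have := hfin j _ ((e1 j _).2 (hP j).1) (hqθ j)
      exact ⟨this.1.to_subtype, this.2⟩
    have := fun j => (hj j).1
    constructor
    · have : Finite (fib G.ThetaC θ) := Finite.of_equiv _ e.symm
      exact Set.toFinite _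
    · rw [Nat.card_congr e, Nat.card_pi]
      exact Finset.prod_congr rfl fun j _ => (hj j).2

theorem ri_mpr (hf : Function.Injective f) (ht : Topo G f)
    (hJ : ∀ v j, v ∈ G.comp (rep j) ↔ J v = j)
    (h : ∀ j, (G.component (rep j)).RationallyIdentifiable) : G.RationallyIdentifiable := by
  have H := spaces_real hf ht hJ
  simp only [ri_iff] at h ⊢
  choose p hr h12 using h
  have h1 := fun j => (h12 j).1
  have h2 := fun j => (h12 j).2
  choose r hp using hr
  obtain ⟨q, hq, hq'⟩ := prodPoly H hJ (fun j => (hp j).1) p (fun j => (hp j).2)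
  have hm : ∀ v, v ∈ G.comp (rep (J v)) := fun v => (hJ v _).2 rfl
  refine ⟨q, ⟨_, H.asm r fun j => (hp j).1, hq⟩, ?_⟩
  have hP := fun j θ hθ => H.proj j _ (hp j).1 θ hθ
  have hs : ∀ j u v, RatOn {θ | θ ∈ G.Theta ∧ ev θ q ≠ 0} (fun θ => phi θ.1 θ.2)
      (fun θ => phi (proj G (rep j) (r j) θ).1 (proj G (rep j) (r j) θ).2 u v) := by
    intro j
    refine RatOn.of_factor (inj_comp hf)
      (M := fun θ => phi (proj G (rep j) (r j) θ).1 (proj G (rep j) (r j) θ).2) ?_ ?_ ?_ ?_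
    · intro θ hθ
      exact good_phi (inj_comp hf) ((H.supp _ _ (hP j θ hθ.1)).UT (topo_comp ht))
        (H.good _ _ (hP j θ hθ.1))
    · intro θ hθ
      exact phi_symm (H.supp _ _ (hP j θ hθ.1)).2.1
    · intro a b
      refine RatOn.congr (F := fun θ => if b.1 ∈ G.comp (rep j) then
        Xm f (phi θ.1 θ.2) a.1 b.1 else (1 : Matrix _ _ ℝ) a b) ?_ ?_
      · split_ifs
        · exact RatOn.Xm RatOn.coord (fun θ hθ => good_phi hf ((H.supp0 _ hθ.1).UT ht)
            (H.good0 _ hθ.1)) _ _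
        · exact RatOn.const _
      · intro θ hθ
        rw [key_Xm_phi hf ht (H.supp0 _ hθ.1) (H.good0 _ hθ.1) (H.supp _ _ (hP j θ hθ.1))
          (H.good _ _ (hP j θ hθ.1)) (proj_compat _ _), Matrix.of_apply]
    · intro a
      refine RatOn.congr (F := fun θ => if a.1 ∈ G.comp (rep j) then
        dm f (phi θ.1 θ.2) a.1 else (r j).2 a a) ?_ ?_
      · split_ifs
        · exact RatOn.dm RatOn.coord (fun θ hθ => good_phi hf ((H.supp0 _ hθ.1).UT ht)
            (H.good0 _ hθ.1)) _
        · exact RatOn.const _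
      · intro θ hθ
        rw [key_dm_phi hf ht (H.supp0 _ hθ.1) (H.good0 _ hθ.1) (H.supp _ _ (hP j θ hθ.1))
          (H.good _ _ (hP j θ hθ.1)) (proj_compat _ _)]
        split_ifs with ha
        · rfl
        · exact proj_extra _ _ a ha
  constructor
  · intro u v
    by_cases hu : u ∈ G.compV (rep (J v))
    · obtain ⟨P, Q, hPQ⟩ := h1 (J v) ⟨u, hu⟩ ⟨v, comp_sub (hm v)⟩
      refine RatOn.comp (hs (J v)) (p := P) (q := Q) ?_
      intro θ hθ
      have := hPQ _ ⟨hP (J v) θ hθ.1, hq' θ hθ.2 _⟩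
      rw [← (proj_compat (r (J v)) θ).1 ⟨u, hu⟩ ⟨v, comp_sub (hm v)⟩ (hm v)]
      exact this
    · refine (RatOn.const 0).congr fun θ hθ => ?_
      exact (H.supp0 _ hθ.1).par (hm v) hu
  · intro u v
    by_cases hu : u ∈ G.comp (rep (J v))
    · obtain ⟨P, Q, hPQ⟩ := h2 (J v) ⟨u, comp_sub hu⟩ ⟨v, comp_sub (hm v)⟩
      refine RatOn.comp (hs (J v)) (p := P) (q := Q) ?_
      intro θ hθ
      have := hPQ _ ⟨hP (J v) θ hθ.1, hq' θ hθ.2 _⟩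
      rw [← (proj_compat (r (J v)) θ).2 ⟨u, comp_sub hu⟩ ⟨v, comp_sub (hm v)⟩ hu (hm v)]
      exact this
    · refine (RatOn.const 0).congr fun θ hθ => ?_
      have hm' := hm v
      exact (H.supp0 _ hθ.1).block (c := rep (J v)) (by tauto)

theorem ri_mp (hf : Function.Injective f) (ht : Topo G f)
    (hJ : ∀ v j, v ∈ G.comp (rep j) ↔ J v = j)
    (h : G.RationallyIdentifiable) (j : Fin k) :
    (G.component (rep j)).RationallyIdentifiable := by
  have H := spaces_real hf ht hJ
  rw [ri_iff] at h ⊢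
  obtain ⟨p, ⟨θ, hθ, hp⟩, h1, h2⟩ := h
  have hm : ∀ v, v ∈ G.comp (rep (J v)) := fun v => (hJ v _).2 rfl
  have hr := fun j => theta_nonempty (G.component (rep j))
  have hη := fun j => H.proj j _ (hr j) _ hθ
  have hasm := H.asm_proj hJ hθ hr
  generalize hd : (fun j => proj G (rep j) (0, 1) θ) = η at hasm
  have hη : ∀ j, η j ∈ (G.component (rep j)).Theta := by rw [← hd]; exact hη
  obtain ⟨q, hq⟩ := pull_asm J η j p
  refine ⟨q, ⟨η j, hη j, by rw [hq, Function.update_eq_self, hasm]; exact hp⟩, ?_⟩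
  have hA : ∀ a ∈ (G.component (rep j)).Theta, asm J (Function.update η j a) ∈ G.Theta :=
    fun a ha => H.asm _ (update_mem hη ha)
  have hcj : ∀ a, Compat G (rep j) (asm J (Function.update η j a)) a := by
    intro a
    have := asm_compat hJ (Function.update η j a) j
    rwa [Function.update_self] at this
  have hci : ∀ a i, i ≠ j → Compat G (rep i) (asm J (Function.update η j a)) (η i) := by
    intro a i hi
    have := asm_compat hJ (Function.update η j a) i
    rwa [Function.update_of_ne hi] at this
  have hgφ : ∀ a ∈ (G.component (rep j)).Theta, Good (fun x => f x.1) (phi a.1 a.2) :=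
    fun a ha => good_phi (inj_comp hf) ((H.supp _ _ ha).UT (topo_comp ht)) (H.good _ _ ha)
  have hs : ∀ u v, RatOn {a | a ∈ (G.component (rep j)).Theta ∧ ev a q ≠ 0}
      (fun a => phi a.1 a.2) (fun a => phi (asm J (Function.update η j a)).1
        (asm J (Function.update η j a)).2 u v) := by
    refine RatOn.of_factor hf (M := fun a => phi (asm J (Function.update η j a)).1
        (asm J (Function.update η j a)).2) ?_ ?_ ?_ ?_
    · intro a ha
      exact good_phi hf ((H.supp0 _ (hA a ha.1)).UT ht) (H.good0 _ (hA a ha.1))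
    · intro a ha
      exact phi_symm (H.supp0 _ (hA a ha.1)).2.1
    · intro u v
      by_cases hu : u ∈ G.compV (rep (J v))
      · by_cases hv : J v = j
        · have hu : u ∈ G.compV (rep j) := hv ▸ hu
          have hv : v ∈ G.comp (rep j) := (hJ _ _).2 hv
          refine (RatOn.Xm (M := fun a : CP ℝ G (rep j) => phi a.1 a.2) RatOn.coord
            (fun a ha => hgφ a ha.1) ⟨u, hu⟩ ⟨v, comp_sub hv⟩).congr fun a ha => ?_
          rw [key_Xm_phi hf ht (H.supp0 _ (hA a ha.1)) (H.good0 _ (hA a ha.1)) (H.supp _ _ ha.1)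
            (H.good _ _ ha.1) (hcj a), Matrix.of_apply, if_pos hv]
        · refine (RatOn.const (Xm (fun x => f x.1) (phi (η (J v)).1 (η (J v)).2) ⟨u, hu⟩
            ⟨v, comp_sub (hm v)⟩)).congr fun a ha => ?_
          rw [key_Xm_phi hf ht (H.supp0 _ (hA a ha.1)) (H.good0 _ (hA a ha.1))
            (H.supp _ _ (hη _)) (H.good _ _ (hη _)) (hci a _ hv), Matrix.of_apply, if_pos (hm v)]
      · exact (RatOn.const 0).congr fun a ha => key_Xm_zero hf ht (H.supp0 _ (hA a ha.1))
          (H.good0 _ (hA a ha.1)) (hm v) hu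
    · intro v
      by_cases hv : J v = j
      · have hv : v ∈ G.comp (rep j) := (hJ _ _).2 hv
        refine (RatOn.dm (M := fun a : CP ℝ G (rep j) => phi a.1 a.2) RatOn.coord
          (fun a ha => hgφ a ha.1) ⟨v, comp_sub hv⟩).congr fun a ha => ?_
        rw [key_dm_phi hf ht (H.supp0 _ (hA a ha.1)) (H.good0 _ (hA a ha.1)) (H.supp _ _ ha.1)
          (H.good _ _ ha.1) (hcj a), if_pos hv]
      · refine (RatOn.const (dm (fun x => f x.1) (phi (η (J v)).1 (η (J v)).2)
          ⟨v, comp_sub (hm v)⟩)).congr fun a ha => ?_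
        rw [key_dm_phi hf ht (H.supp0 _ (hA a ha.1)) (H.good0 _ (hA a ha.1))
          (H.supp _ _ (hη _)) (H.good _ _ (hη _)) (hci a _ hv), if_pos (hm v)]
  constructor
  · intro u v
    by_cases hv : v.1 ∈ G.comp (rep j)
    · obtain ⟨P, Q, hPQ⟩ := h1 u.1 v.1
      refine RatOn.comp hs (p := P) (q := Q) ?_
      intro a ha
      rw [(hcj a).1 u v hv]
      exact hPQ _ ⟨hA a ha.1, by rw [← hq]; exact ha.2⟩
    · exact (RatOn.const 0).congr fun a ha => (H.supp _ _ ha.1).cL hv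
  · intro u v
    by_cases hv : v.1 ∈ G.comp (rep j)
    · by_cases hu : u.1 ∈ G.comp (rep j)
      · obtain ⟨P, Q, hPQ⟩ := h2 u.1 v.1
        refine RatOn.comp hs (p := P) (q := Q) ?_
        intro a ha
        rw [(hcj a).2 u v hu hv]
        exact hPQ _ ⟨hA a ha.1, by rw [← hq]; exact ha.2⟩
      · have : u ≠ v := by rintro rfl; exact hu hv
        exact (RatOn.const 0).congr fun a ha => (H.supp _ _ ha.1).cO' hu this
    · by_cases huv : u = v
      · subst huv
        refine (RatOn.dm (M := fun a : CP ℝ G (rep j) => phi a.1 a.2) RatOn.coord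
          (fun a ha => hgφ a ha.1) u).congr fun a ha => ?_
        rw [dm_phi (inj_comp hf) ((H.supp _ _ ha.1).UT (topo_comp ht)) (H.good _ _ ha.1),
          dm_extra hf (H.supp _ _ ha.1) u hv]
      · exact (RatOn.const 0).congr fun a ha => (H.supp _ _ ha.1).cO hv huv

end Main
end MCD


/-- Decomposition of an acyclic mixed graph into its mixed components `G_1, …, G_k`
(here enumerated by representatives `rep j` of the bidirected connected components):
(i) `G` is rationally (resp. generically) identifiable iff all components are;
(ii) `φ_G` is generically infinite-to-one iff some `φ_{G_j}` is;
(iii) if each complex `φ_{G_j,ℂ}` is generically `h_j`-to-one with `h_j < ∞`, then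
`φ_{G,ℂ}` is generically `∏ h_j`-to-one. -/
theorem mixed_component_decomposition {V : Type*} [Fintype V] [DecidableEq V]
    (G : MixedGraph V) (hacyclic : G.Acyclic)
    (k : ℕ) (rep : Fin k → V) (hrep : ∀ v : V, ∃! j : Fin k, v ∈ G.comp (rep j)) :
    (G.RationallyIdentifiable ↔ ∀ j, (G.component (rep j)).RationallyIdentifiable) ∧
    (G.GenericallyIdentifiable ↔ ∀ j, (G.component (rep j)).GenericallyIdentifiable) ∧
    (G.GenInfiniteToOne ↔ ∃ j, (G.component (rep j)).GenInfiniteToOne) ∧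
    (∀ h : Fin k → ℕ, (∀ j, (G.component (rep j)).GenHToOneC (h j)) →
      G.GenHToOneC (∏ j, h j)) := by
  obtain ⟨f, hf, ht⟩ := MCD.exists_topo hacyclic
  choose J hJ1 hJ2 using hrep
  have hJ : ∀ v j, v ∈ G.comp (rep j) ↔ J v = j :=
    fun v j => ⟨fun h => (hJ2 v j h).symm, fun h => h ▸ hJ1 v⟩
  exact ⟨⟨MCD.ri_mp hf ht hJ, MCD.ri_mpr hf ht hJ⟩, ⟨MCD.gi_mp hf ht hJ, MCD.gi_mpr hf ht hJ⟩,
    ⟨MCD.ginf_mp hf ht hJ, fun ⟨j, hj⟩ => MCD.ginf_mpr hf ht hJ j hj⟩, MCD.genH hf ht hJ⟩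
end

section
/- Let G=(V,D,B) be a mixed graph, v∈V, and Y⊆V∖({v}∪sib(v)) with |Y|=|pa(v)|=n; write Y={y_1,…,y_n} and pa(v)={p_1,…,p_n}. For (Λ,Ω)∈Θ let Σ=φ_G(Λ,Ω) and define the n×n matrix A by A_ij=[(I−Λ)^T Σ]_{y_i p_j} if y_i∈htr(v) and A_ij=Σ_{y_i p_j} if y_i∉htr(v). If Y satisfies the half-trek criterion with respect to v, then A is generically invertible: there is a proper algebraic subset of Θ outside of which det(A)≠0 (equivalently, det(A)≠0 for at least one (Λ,Ω)∈Θ). -/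
open scoped Classical Matrix

namespace MixedGraph

/-- Every non-final node of a walk has a successor that is closer to the end. -/
lemma exists_next {V : Type*} [DecidableEq V] (r : V → V → Prop) (l : List V) (hl : l ≠ [])
    (hc : l.IsChain r) (a : V) (ha : a ∈ l) (hne : a ≠ l.getLast hl) :
    ∃ b ∈ l, r a b ∧ l.reverse.idxOf b < l.reverse.idxOf a := by
  have hc' : l.reverse.IsChain (fun x y => r y x) := by
    rw [List.isChain_reverse]; exact hc
  have ha' : a ∈ l.reverse := by simpa using ha
  have hlt : l.reverse.idxOf a < l.reverse.length := List.idxOf_lt_length_iff.2 ha'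
  have hget : l.reverse[l.reverse.idxOf a] = a := List.getElem_idxOf hlt
  rcases hk : l.reverse.idxOf a with _ | k
  · exfalso
    apply hne
    have h0 : l.reverse[0]'(by omega) = a := by
      simpa only [hk] using hget
    rw [← h0]
    simp [List.getElem_reverse, List.getLast_eq_getElem]
  · have hk1 : k + 1 < l.reverse.length := by omega
    have hak : l.reverse[k + 1] = a := by
      simpa only [hk] using hget
    refine ⟨l.reverse[k], ?_, ?_, ?_⟩
    · have := List.getElem_mem (l := l.reverse) (n := k) (by omega)
      simpa using this
    · have := List.isChain_iff_getElem.1 hc' k hk1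
      rw [hak] at this
      exact this
    · have : l.reverse.idxOf (l.reverse[k]) ≤ k := by
        by_contra hcon
        push Not at hcon
        have := List.not_of_lt_findIdx (p := fun x => x == l.reverse[k]) (xs := l.reverse) (i := k) hcon
        simp at this
      omega

/-- Path matrix for vertex-disjoint walks. -/
lemma exists_lambda {V : Type*} [Fintype V] [DecidableEq V] (G : MixedGraph V) (n : ℕ)
    (l : Fin n → List V) (hl : ∀ i, l i ≠ [])
    (hc : ∀ i, (l i).IsChain fun a b => (a, b) ∈ G.D)
    (hdisj : ∀ i j a, a ∈ l i → a ∈ l j → i = j) :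
    ∃ Λ : Matrix V V ℝ, (∀ a b, (a, b) ∉ G.D → Λ a b = 0) ∧ (1 - Λ).det ≠ 0 ∧
      ∀ i a, (1 - Λ)⁻¹ a ((l i).getLast (hl i)) = if a ∈ l i then 1 else 0 := by
  have hnext : ∀ a, ∃ b, ∀ i, a ∈ l i → a ≠ (l i).getLast (hl i) →
      b ∈ l i ∧ (a, b) ∈ G.D ∧ (l i).reverse.idxOf b < (l i).reverse.idxOf a := by
    intro a
    by_cases h : ∃ i, a ∈ l i ∧ a ≠ (l i).getLast (hl i)
    · obtain ⟨i, hi, hne⟩ := h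
      obtain ⟨b, hb, hr, hd⟩ := exists_next (fun a b => (a, b) ∈ G.D) (l i) (hl i) (hc i) a hi hne
      refine ⟨b, fun j hj _ => ?_⟩
      obtain rfl := hdisj i j a hi hj
      exact ⟨hb, hr, hd⟩
    · exact ⟨a, fun i hi hne => absurd ⟨i, hi, hne⟩ h⟩
  choose nxt hnxt using hnext
  let Act : V → Prop := fun a => ∃ i, a ∈ l i ∧ a ≠ (l i).getLast (hl i)
  let Λ : Matrix V V ℝ := fun a b => if Act a ∧ b = nxt a then 1 else 0
  have hmul : ∀ (x : V → ℝ) a, ((1 - Λ) *ᵥ x) a = x a - if Act a then x (nxt a) else 0 := by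
    intro x a
    rw [Matrix.sub_mulVec, Matrix.one_mulVec, Pi.sub_apply]
    congr 1
    by_cases h : Act a
    · simp [Matrix.mulVec, dotProduct, Λ, h]
    · simp [Matrix.mulVec, dotProduct, Λ, h]
  have hdet : (1 - Λ).det ≠ 0 := by
    intro h0
    obtain ⟨x, hx0, hx⟩ := Matrix.exists_mulVec_eq_zero_iff.2 h0
    apply hx0
    have hin : ∀ i, ∀ k a, a ∈ l i → (l i).reverse.idxOf a = k → x a = 0 := by
      intro i k
      induction k using Nat.strong_induction_on with
      | _ k ih =>
        intro a ha hk
        have h1 := hmul x a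
        rw [hx] at h1
        by_cases hA : Act a
        · have hA' := hA
          obtain ⟨j, hj, hne⟩ := hA'
          obtain rfl := hdisj i j a ha hj
          obtain ⟨hb, -, hd⟩ := hnxt a i ha hne
          have := ih _ (hk ▸ hd) (nxt a) hb rfl
          simp [hA, this] at h1
          exact h1.symm
        · simp [hA] at h1
          exact h1.symm
    funext a
    by_cases hA : Act a
    · obtain ⟨j, hj, _⟩ := hA
      exact hin j _ a hj rfl
    · have h1 := hmul x a
      rw [hx] at h1
      simp [hA] at h1
      exact h1.symm
  refine ⟨Λ, ?_, hdet, ?_⟩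
  · intro a b hab
    simp only [Λ]
    rw [if_neg]
    rintro ⟨⟨i, hi, hne⟩, rfl⟩
    exact hab (hnxt a i hi hne).2.1
  · intro i a
    let x : V → ℝ := fun a => if a ∈ l i then 1 else 0
    have hx : (1 - Λ) *ᵥ x = Pi.single ((l i).getLast (hl i)) 1 := by
      funext a
      rw [hmul]
      by_cases hA : Act a
      · have hA' := hA
        obtain ⟨j, hj, hne⟩ := hA'
        obtain ⟨hb, -, -⟩ := hnxt a j hj hne
        by_cases hij : i = j
        · subst hij
          simp [x, hA, hj, hb, Pi.single_apply, hne]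
        · have h1 : a ∉ l i := fun h => hij (hdisj i j a h hj)
          have h2 : nxt a ∉ l i := fun h => hij (hdisj i j _ h hb)
          have h3 : a ≠ (l i).getLast (hl i) := fun h => h1 (h ▸ List.getLast_mem (hl i))
          simp [x, hA, h1, h2, Pi.single_apply, h3]
      · by_cases ha : a ∈ l i
        · have h3 : a = (l i).getLast (hl i) := by
            by_contra h
            exact hA ⟨i, ha, h⟩
          simp [x, hA, ha, Pi.single_apply, ← h3]
        · have h3 : a ≠ (l i).getLast (hl i) := fun h => ha (h ▸ List.getLast_mem (hl i))
          simp [x, hA, ha, Pi.single_apply, h3]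
    have h2 : (1 - Λ)⁻¹ *ᵥ ((1 - Λ) *ᵥ x) = x := by
      rw [Matrix.mulVec_mulVec, Matrix.nonsing_inv_mul _ (isUnit_iff_ne_zero.2 hdet),
        Matrix.one_mulVec]
    rw [hx, Matrix.mulVec_single_one] at h2
    exact congrFun h2 a

/-- The left factor, denominators cleared. -/
noncomputable def leftMat {V : Type*} [Fintype V] [DecidableEq V] {R : Type*} [CommRing R] {n : ℕ}
    (y : Fin n → V) (T : Set V) (Λ : Matrix V V R) : Matrix (Fin n) V R :=
  Matrix.of fun i a => if y i ∈ T then (1 : Matrix V V R) (y i) a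
    else (1 - Λ).adjugate a (y i)

/-- The right factor, denominators cleared. -/
noncomputable def rightMat {V : Type*} [Fintype V] [DecidableEq V] {R : Type*} [CommRing R] {n : ℕ}
    (p : Fin n → V) (Λ : Matrix V V R) : Matrix V (Fin n) R :=
  Matrix.of fun a j => (1 - Λ).adjugate a (p j)

lemma adj_map {V : Type*} [Fintype V] [DecidableEq V] {R S : Type*} [CommRing R] [CommRing S]
    (f : R →+* S) (Λ : Matrix V V R) :
    (1 - Λ.map f).adjugate = (1 - Λ).adjugate.map f := by
  have := f.map_adjugate (1 - Λ)
  simp only [RingHom.mapMatrix_apply] at this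
  rw [this]
  congr 1
  ext a b
  simp [Matrix.one_apply, apply_ite f]

lemma leftMat_map {V : Type*} [Fintype V] [DecidableEq V] {R S : Type*} [CommRing R] [CommRing S]
    {n : ℕ} (y : Fin n → V) (T : Set V) (f : R →+* S) (Λ : Matrix V V R) :
    leftMat y T (Λ.map f) = (leftMat y T Λ).map f := by
  ext i a
  simp only [leftMat, Matrix.of_apply, Matrix.map_apply, adj_map]
  split_ifs <;> simp [Matrix.one_apply, apply_ite f]

lemma rightMat_map {V : Type*} [Fintype V] [DecidableEq V] {R S : Type*} [CommRing R] [CommRing S]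
    {n : ℕ} (p : Fin n → V) (f : R →+* S) (Λ : Matrix V V R) :
    rightMat p (Λ.map f) = (rightMat p Λ).map f := by
  ext i a
  simp only [rightMat, Matrix.of_apply, Matrix.map_apply, adj_map]

/-- The interpolating matrix of tops. -/
noncomputable def topMat {V : Type*} [DecidableEq V] {R : Type*} [CommRing R] {n : ℕ}
    (y h : Fin n → V) (s : R) : Matrix V (Fin n) R :=
  Matrix.of fun a i => (if a = y i then 1 - s else 0) + (if a = h i then s else 0)

lemma topMat_map {V : Type*} [DecidableEq V] {R S : Type*} [CommRing R] [CommRing S] {n : ℕ}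
    (y h : Fin n → V) (f : R →+* S) (s : R) :
    topMat y h (f s) = (topMat y h s).map f := by
  ext a i
  simp [topMat, apply_ite f]

lemma exists_good_s {V : Type*} [Fintype V] [DecidableEq V] {n : ℕ} (y h p : Fin n → V)
    (hy : Function.Injective y) (T : Set V) (Λ : Matrix V V ℝ)
    (hg : ((topMat y h (1 : ℝ))ᵀ * rightMat p Λ).det ≠ 0) :
    ∃ s : ℝ, (1 - s • Λ).det ≠ 0 ∧ (leftMat y T (s • Λ) * topMat y h s).det ≠ 0 ∧
      ((topMat y h s)ᵀ * rightMat p (s • Λ)).det ≠ 0 := by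
  let M : Matrix V V (Polynomial ℝ) := (Polynomial.X : Polynomial ℝ) • Λ.map Polynomial.C
  have hM : ∀ s : ℝ, M.map (Polynomial.evalRingHom s) = s • Λ := by
    intro s; ext a b; simp [M]; ring
  let P1 := (1 - M).det
  let P2 := (leftMat y T M * topMat y h (Polynomial.X : Polynomial ℝ)).det
  let P3 := ((topMat y h (Polynomial.X : Polynomial ℝ))ᵀ * rightMat p M).det
  have hX : ∀ s : ℝ, (Polynomial.evalRingHom s) Polynomial.X = s := by intro s; simp
  have e1 : ∀ s, P1.eval s = (1 - s • Λ).det := by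
    intro s
    have := (Polynomial.evalRingHom s).map_det (1 - M)
    rw [map_sub, map_one, RingHom.mapMatrix_apply, hM] at this
    exact this
  have e2 : ∀ s, P2.eval s = (leftMat y T (s • Λ) * topMat y h s).det := by
    intro s
    have := (Polynomial.evalRingHom s).map_det
      (leftMat y T M * topMat y h (Polynomial.X : Polynomial ℝ))
    rw [RingHom.mapMatrix_apply, Matrix.map_mul, ← leftMat_map, ← topMat_map, hM, hX] at this
    exact this
  have e3 : ∀ s, P3.eval s = ((topMat y h s)ᵀ * rightMat p (s • Λ)).det := by
    intro s
    have := (Polynomial.evalRingHom s).map_det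
      ((topMat y h (Polynomial.X : Polynomial ℝ))ᵀ * rightMat p M)
    rw [RingHom.mapMatrix_apply, Matrix.map_mul, ← rightMat_map, Matrix.transpose_map,
      ← topMat_map, hM, hX] at this
    exact this
  have n1 : P1 ≠ 0 := by
    intro h0
    have := e1 0
    simp [h0] at this
  have n2 : P2 ≠ 0 := by
    intro h0
    have := e2 0
    have hone : leftMat y T ((0 : ℝ) • Λ) * topMat y h (0 : ℝ) = 1 := by
      ext i j
      simp [leftMat, topMat, Matrix.mul_apply, Matrix.one_apply, hy.eq_iff, eq_comm]
    rw [hone] at this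
    simp [h0] at this
  have n3 : P3 ≠ 0 := by
    intro h0
    have := e3 1
    rw [one_smul] at this
    rw [h0] at this
    exact hg (by simpa using this.symm)
  have hprod : P1 * P2 * P3 ≠ 0 := mul_ne_zero (mul_ne_zero n1 n2) n3
  have : ∃ s, (P1 * P2 * P3).eval s ≠ 0 := by
    by_contra hcon
    push Not at hcon
    exact hprod (Polynomial.funext (by simpa using hcon))
  obtain ⟨s, hs⟩ := this
  rw [Polynomial.eval_mul, Polynomial.eval_mul, e1, e2, e3] at hs
  exact ⟨s, left_ne_zero_of_mul (left_ne_zero_of_mul hs),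
    right_ne_zero_of_mul (left_ne_zero_of_mul hs), right_ne_zero_of_mul hs⟩

lemma exists_theta {V : Type*} [Fintype V] [DecidableEq V] (G : MixedGraph V) {n : ℕ}
    (y h p : Fin n → V) (hy : Function.Injective y) (T : Set V)
    (hyh : ∀ i, y i = h i ∨ (y i, h i) ∈ G.B)
    (Λ : Matrix V V ℝ) (hΛ : ∀ a b, (a, b) ∉ G.D → Λ a b = 0)
    (hg : ((topMat y h (1 : ℝ))ᵀ * rightMat p Λ).det ≠ 0) :
    ∃ θ ∈ G.Theta, (leftMat y T θ.1 * θ.2 * rightMat p θ.1).det ≠ 0 := by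
  obtain ⟨s, h1, h2, h3⟩ := exists_good_s y h p hy T Λ hg
  set L := leftMat y T (s • Λ)
  set W := topMat y h s with hW
  set R := rightMat p (s • Λ)
  have hcont : Continuous fun ε : ℝ => (L * (W * Wᵀ + ε • (1 : Matrix V V ℝ)) * R).det := by
    fun_prop
  have h0 : (L * (W * Wᵀ + (0 : ℝ) • (1 : Matrix V V ℝ)) * R).det ≠ 0 := by
    have : L * (W * Wᵀ + (0 : ℝ) • (1 : Matrix V V ℝ)) * R = (L * W) * (Wᵀ * R) := by
      simp [Matrix.mul_assoc]
    rw [this, Matrix.det_mul]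
    exact mul_ne_zero h2 h3
  have hev := hcont.continuousAt.eventually_ne h0
  have hev' : ∀ᶠ ε in nhdsWithin (0 : ℝ) (Set.Ioi 0), 0 < ε ∧
      (L * (W * Wᵀ + ε • (1 : Matrix V V ℝ)) * R).det ≠ 0 :=
    (eventually_mem_nhdsWithin).and (hev.filter_mono nhdsWithin_le_nhds)
  obtain ⟨ε, hε, hne⟩ := hev'.exists
  refine ⟨(s • Λ, W * Wᵀ + ε • (1 : Matrix V V ℝ)), ⟨⟨?_, isUnit_iff_ne_zero.2 h1⟩, ?_, ?_⟩, hne⟩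
  · intro a b hab
    simp [hΛ a b hab]
  · have hps : (W * Wᵀ).PosSemidef := by
      have := Matrix.posSemidef_self_mul_conjTranspose W
      rwa [Matrix.conjTranspose_eq_transpose_of_trivial] at this
    exact (Matrix.PosDef.one.smul hε).posSemidef_add hps
  · intro a b hab hB
    have : (W * Wᵀ) a b = 0 := by
      rw [Matrix.mul_apply]
      refine Finset.sum_eq_zero fun i _ => ?_
      have hi := hyh i
      simp only [hW, topMat, Matrix.transpose_apply, Matrix.of_apply]
      by_cases ha : a = y i ∨ a = h i
      · by_cases hb : b = y i ∨ b = h i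
        · exfalso
          rcases ha with rfl | rfl <;> rcases hb with rfl | rfl
          · exact hab rfl
          · exact hi.elim hab hB
          · exact hi.elim (fun e => hab e.symm) (fun e => hB (G.B_symm _ _ e))
          · exact hab rfl
        · push Not at hb
          simp [hb.1, hb.2]
      · push Not at ha
        simp [ha.1, ha.2]
    simp [this, hab]

end MixedGraph

/-- Lemma 1: if `Y = {y 1, …, y n}` (disjoint from `{v} ∪ sib(v)`) satisfies the half-trek
criterion with respect to `v`, where `pa(v) = {p 1, …, p n}`, then the matrix `A` with
`A i j = [(I-Λ)ᵀ Σ]_{y i, p j}` when `y i ∈ htr(v)` and `A i j = Σ_{y i, p j}` otherwise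
is generically invertible. -/
theorem htc_matrix_generically_invertible {V : Type*} [Fintype V] [DecidableEq V]
    (G : MixedGraph V) (v : V) (n : ℕ) (y p : Fin n → V)
    (hy : Function.Injective y) (hp : Function.Injective p)
    (hpa : Finset.univ.image p = G.pa v)
    (hYv : ∀ i, y i ≠ v ∧ y i ∉ G.sib v)
    (hHTC : G.SatisfiesHTC v (Finset.univ.image y)) :
    ∃ V₀, G.IsProperAlgebraic V₀ ∧
      ∀ θ ∈ G.Theta \ V₀,
        (Matrix.of fun i j : Fin n =>
          if y i ∈ G.htr v then
            (((1 - θ.1)ᵀ * MixedGraph.phi θ.1 θ.2 : Matrix V V ℝ)) (y i) (p j)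
          else
            MixedGraph.phi θ.1 θ.2 (y i) (p j)).det ≠ 0 := by
  obtain ⟨hcard, -, f, hhalf, ⟨hsrc, htgt, hinj⟩, hns⟩ := hHTC
  have hmem : ∀ i, y i ∈ Finset.univ.image y := fun i => Finset.mem_image_of_mem _ (Finset.mem_univ i)
  let l : Fin n → List V := fun i => (f (y i)).right
  have hl : ∀ i, l i ≠ [] := fun i => (f (y i)).right_ne
  have hdisj : ∀ i j a, a ∈ l i → a ∈ l j → i = j := by
    intro i j a hi hj
    by_contra hne
    have := (hns (y i) (hmem i) (y j) (hmem j) (fun h => hne (hy h))).2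
    exact Finset.disjoint_left.1 this (List.mem_toFinset.2 hi) (List.mem_toFinset.2 hj)
  obtain ⟨Λ, hΛ, hdet, hinv⟩ := G.exists_lambda n l hl (fun i => (f (y i)).right_chain) hdisj
  let h : Fin n → V := fun i => (l i).head (hl i)
  have hyh : ∀ i, y i = h i ∨ (y i, h i) ∈ G.B := by
    intro i
    have h1 := hhalf (y i) (hmem i)
    have hhead : (f (y i)).left.head (f (y i)).left_ne = y i := by
      rw [← hsrc (y i) (hmem i)]
      obtain ⟨c, hc⟩ := Finset.card_eq_one.1 h1
      have key : ∀ z ∈ (f (y i)).left, z = c := fun z hz => by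
        have : z ∈ (f (y i)).leftSet := List.mem_toFinset.2 hz
        rw [hc] at this
        exact Finset.mem_singleton.1 this
      have e1 := key _ (List.head_mem (f (y i)).left_ne)
      have e2 := key _ (List.getLast_mem (f (y i)).left_ne)
      rw [hsrc (y i) (hmem i), e1]
      rw [← e2]
      exact hsrc (y i) (hmem i)
    have hcnd := (f (y i)).head_cond
    rw [hhead] at hcnd
    split_ifs at hcnd
    · exact Or.inr hcnd
    · exact Or.inl hcnd
  let q : Fin n → V := fun i => (l i).getLast (hl i)
  have hq : ∀ i, ∃ j, p j = q i := by
    intro i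
    have : q i ∈ G.pa v := by
      rw [← htgt]
      exact Finset.mem_image.2 ⟨y i, hmem i, rfl⟩
    rw [← hpa] at this
    obtain ⟨j, -, hj⟩ := Finset.mem_image.1 this
    exact ⟨j, hj⟩
  choose σ hσ using hq
  have hσinj : Function.Injective σ := by
    intro i j hij
    have : q i = q j := by rw [← hσ, ← hσ, hij]
    exact hdisj i j (q i) (List.getLast_mem _) (this ▸ List.getLast_mem _)
  let e : Equiv.Perm (Fin n) := Equiv.ofBijective σ (Finite.injective_iff_bijective.1 hσinj)
  have hadj : ∀ i a, (1 - Λ).adjugate a (p (e i)) = if a ∈ l i then (1 - Λ).det else 0 := by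
    intro i a
    have h1 := hinv i a
    have h2 : (1 - Λ).adjugate = (1 - Λ).det • (1 - Λ)⁻¹ := by
      rw [Matrix.inv_def, Ring.inverse_eq_inv', smul_smul, mul_inv_cancel₀ hdet, one_smul]
    have h3 : p (e i) = (l i).getLast (hl i) := hσ i
    rw [h2, h3, Matrix.smul_apply, h1]
    simp
  have hg : ((MixedGraph.topMat y h (1 : ℝ))ᵀ * MixedGraph.rightMat p Λ).det ≠ 0 := by
    have key : ((MixedGraph.topMat y h (1 : ℝ))ᵀ * MixedGraph.rightMat p Λ).submatrix id e
        = (1 - Λ).det • (1 : Matrix (Fin n) (Fin n) ℝ) := by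
      ext i j
      have hm : h i ∈ l j ↔ i = j :=
        ⟨fun hh => hdisj i j _ (List.head_mem (hl i)) hh, fun hh => hh ▸ List.head_mem (hl i)⟩
      simp [Matrix.mul_apply, MixedGraph.topMat, MixedGraph.rightMat, Matrix.one_apply]
      rw [hadj, if_congr hm rfl rfl]
    intro h0
    have h1 := Matrix.det_permute' e ((MixedGraph.topMat y h (1 : ℝ))ᵀ * MixedGraph.rightMat p Λ)
    rw [key, h0, Matrix.det_smul, Matrix.det_one] at h1
    simp at h1
    exact hdet h1.1
  obtain ⟨θ₀, hθ₀, hne₀⟩ := G.exists_theta y h p hy (G.htr v) hyh Λ hΛ hg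
  let XL : Matrix V V (MvPolynomial ((V × V) ⊕ (V × V)) ℝ) :=
    Matrix.of fun a b => MvPolynomial.X (Sum.inl (a, b))
  let XO : Matrix V V (MvPolynomial ((V × V) ⊕ (V × V)) ℝ) :=
    Matrix.of fun a b => MvPolynomial.X (Sum.inr (a, b))
  let P := (MixedGraph.leftMat y (G.htr v) XL * XO * MixedGraph.rightMat p XL).det
  have hP : ∀ θ, MixedGraph.evalParam θ P =
      (MixedGraph.leftMat y (G.htr v) θ.1 * θ.2 * MixedGraph.rightMat p θ.1).det := by
    intro θ
    let φ : MvPolynomial ((V × V) ⊕ (V × V)) ℝ →+* ℝ :=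
      MvPolynomial.eval (Sum.elim (fun e => θ.1 e.1 e.2) (fun e => θ.2 e.1 e.2))
    have h1 : XL.map φ = θ.1 := by ext a b; simp [XL, φ]
    have h2 : XO.map φ = θ.2 := by ext a b; simp [XO, φ]
    have := φ.map_det (MixedGraph.leftMat y (G.htr v) XL * XO * MixedGraph.rightMat p XL)
    rw [RingHom.mapMatrix_apply, Matrix.map_mul, Matrix.map_mul, ← MixedGraph.leftMat_map,
      ← MixedGraph.rightMat_map, h1, h2] at this
    exact this
  refine ⟨{θ ∈ G.Theta | MixedGraph.evalParam θ P = 0}, ⟨P, ⟨θ₀, hθ₀, ?_⟩, rfl⟩, ?_⟩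
  · rw [hP]; exact hne₀
  · rintro θ ⟨hθ, hθP⟩ hA
    apply hθP
    refine ⟨hθ, ?_⟩
    rw [hP]
    have hu : IsUnit (1 - θ.1).det := hθ.1.2
    set d := (1 - θ.1).det with hd
    have hd0 : d ≠ 0 := hu.ne_zero
    have hadj : (1 - θ.1).adjugate = d • (1 - θ.1)⁻¹ := by
      rw [Matrix.inv_def, Ring.inverse_eq_inv', smul_smul, ← hd, mul_inv_cancel₀ hd0, one_smul]
    have hphi : (1 - θ.1)ᵀ * MixedGraph.phi θ.1 θ.2 = θ.2 * (1 - θ.1)⁻¹ := by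
      rw [MixedGraph.phi, ← Matrix.mul_assoc, ← Matrix.mul_assoc, ← Matrix.transpose_mul,
        Matrix.nonsing_inv_mul _ hu, Matrix.transpose_one, Matrix.one_mul]
    rw [hphi] at hA
    let c : Fin n → ℝ := fun i => if y i ∈ G.htr v then d else d * d
    have hfac : MixedGraph.leftMat y (G.htr v) θ.1 * θ.2 * MixedGraph.rightMat p θ.1 =
        Matrix.of fun i j => c i * (Matrix.of fun i j : Fin n =>
          if y i ∈ G.htr v then (θ.2 * (1 - θ.1)⁻¹ : Matrix V V ℝ) (y i) (p j)
          else MixedGraph.phi θ.1 θ.2 (y i) (p j)) i j := by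
      ext i j
      by_cases hi : y i ∈ G.htr v
      · simp [Matrix.mul_apply, MixedGraph.leftMat, MixedGraph.rightMat, hadj, hi, c,
          Matrix.one_apply, Finset.mul_sum, mul_left_comm]
      · simp only [Matrix.mul_apply, MixedGraph.leftMat, MixedGraph.rightMat, hadj, hi, c,
          MixedGraph.phi, Matrix.of_apply, if_false, Matrix.smul_apply, smul_eq_mul,
          Matrix.transpose_apply, Finset.mul_sum, Finset.sum_mul]
        refine Finset.sum_congr rfl fun a _ => Finset.sum_congr rfl fun b _ => ?_
        ring
    rw [hfac, Matrix.det_mul_column, hA, mul_zero]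
end

section
/- Let G=(V,D,B) be a mixed graph, v∈V, and Y⊆V∖({v}∪sib(v)) with |Y|=|pa(v)|=n. If there exists (Λ,Ω)∈Θ such that, with Σ=φ_G(Λ,Ω), the n×n matrix [(I−Λ)^T Σ]_{Y,pa(v)} is invertible, then Y satisfies the half-trek criterion with respect to v. -/
open scoped Classical Matrix

namespace MixedGraph

/-- Following a permutation of `Fin n ⊕ V` from each `inl i` until the first return to the left
summand gives pairwise disjoint lists of elements of `V`. -/
theorem perm_paths {V : Type*} [Finite V] {n : ℕ} (σ : Equiv.Perm (Fin n ⊕ V))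
    (h0 : ∀ i, ∃ w, σ (Sum.inl i) = Sum.inr w) :
    ∃ L : Fin n → List V, ∃ hne : ∀ i, L i ≠ [],
      (∀ i, (L i).IsChain fun a b => σ (Sum.inr a) = Sum.inr b ∧ a ≠ b) ∧
      (∀ i, σ (Sum.inl i) = Sum.inr ((L i).head (hne i))) ∧
      (∀ i, ∃ j, σ (Sum.inr ((L i).getLast (hne i))) = Sum.inl j) ∧
      (∀ i i', i ≠ i' → ∀ w, w ∈ L i → w ∉ L i') := by
  by_cases hV : Nonempty V
  swap
  · have : IsEmpty (Fin n) := ⟨fun i => hV ⟨(h0 i).choose⟩⟩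
    exact ⟨fun _ => [], fun i => isEmptyElim i, fun i => isEmptyElim i, fun i => isEmptyElim i,
      fun i => isEmptyElim i, fun i => isEmptyElim i⟩
  obtain ⟨v0⟩ := hV
  have hfin : ∀ i : Fin n, ∃ N, ((σ : _ → _)^[N + 1] (Sum.inl i)).isLeft = true := by
    intro i
    obtain ⟨N, hN, hp⟩ := Function.Injective.mem_periodicPts σ.injective (Sum.inl i)
    refine ⟨N - 1, ?_⟩
    rw [Nat.sub_add_cancel hN, hp.eq]
    rfl
  let K : Fin n → ℕ := fun i => Nat.find (hfin i)
  have hK : ∀ i, ∃ j, (σ : _ → _)^[K i + 1] (Sum.inl i) = Sum.inl j := fun i =>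
    Sum.isLeft_iff.mp (Nat.find_spec (hfin i))
  have hlt : ∀ i k, k < K i → ∃ w, (σ : _ → _)^[k + 1] (Sum.inl i) = Sum.inr w := by
    intro i k hk
    have := Nat.find_min (hfin i) hk
    exact Sum.isRight_iff.mp (by simpa using this)
  have hKpos : ∀ i, 0 < K i := by
    intro i
    by_contra hc
    obtain ⟨j, hj⟩ := hK i
    obtain ⟨w, hw⟩ := h0 i
    have : K i = 0 := by omega
    rw [this] at hj
    simp [hw] at hj
  let g : Fin n → ℕ → V := fun i k => Sum.elim (fun _ => v0) id ((σ : _ → _)^[k + 1] (Sum.inl i))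
  have hg : ∀ i k, k < K i → (σ : _ → _)^[k + 1] (Sum.inl i) = Sum.inr (g i k) := by
    intro i k hk
    obtain ⟨w, hw⟩ := hlt i k hk
    simp only [g, hw, Sum.elim_inr, id]
  have key : ∀ i i' a b, a ≤ b → a < K i → b < K i' → g i a = g i' b → i = i' := by
    intro i i' a b hab ha hb hE
    have e : (σ : _ → _)^[a + 1] (Sum.inl i) = (σ : _ → _)^[b + 1] (Sum.inl i') := by
      rw [hg i a ha, hg i' b hb, hE]
    obtain ⟨c, rfl⟩ := Nat.exists_eq_add_of_le hab
    rw [show a + c + 1 = (a + 1) + c by omega, Function.iterate_add_apply (⇑σ) (a + 1) c] at e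
    have e2 := (σ.injective.iterate (a + 1)) e
    cases c with
    | zero => simpa using e2
    | succ c =>
      obtain ⟨w, hw⟩ := hlt i' c (by omega)
      rw [hw] at e2
      cases e2
  refine ⟨fun i => (List.range (K i)).map (g i), ?_, ?_, ?_, ?_, ?_⟩
  · intro i
    have := hKpos i
    simp; omega
  · intro i
    rw [List.isChain_iff_getElem]
    intro k hk
    simp only [List.length_map, List.length_range] at hk
    simp only [List.getElem_map, List.getElem_range]
    have h1 : σ (Sum.inr (g i k)) = Sum.inr (g i (k + 1)) := by
      rw [← hg i k (by omega), ← hg i (k + 1) (by omega), ← Function.iterate_succ_apply' σ]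
    refine ⟨h1, fun hE => ?_⟩
    have e : (σ : _ → _)^[k + 1] (Sum.inl i) = (σ : _ → _)^[k + 1 + 1] (Sum.inl i) := by
      rw [hg i k (by omega), hg i (k + 1) (by omega), hE]
    rw [Function.iterate_succ_apply (⇑σ) (k + 1)] at e
    have e2 := (σ.injective.iterate (k + 1)) e
    obtain ⟨w, hw⟩ := h0 i
    rw [hw] at e2
    cases e2
  · intro i
    have := hg i 0 (hKpos i)
    simpa using this
  · intro i
    obtain ⟨j, hj⟩ := hK i
    refine ⟨j, ?_⟩
    have hp := hKpos i
    rw [List.getLast_eq_getElem]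
    simp only [List.getElem_map, List.getElem_range, List.length_map, List.length_range]
    rw [← hg i (K i - 1) (by omega), ← Function.iterate_succ_apply' σ, ← hj]
    congr 2
    omega
  · intro i i' hii w hw hw'
    simp only [List.mem_map, List.mem_range] at hw hw'
    obtain ⟨a, ha, rfl⟩ := hw
    obtain ⟨b, hb, hE⟩ := hw'
    rcases le_total a b with hab | hab
    · exact hii (key i i' a b hab ha hb hE.symm)
    · exact hii (key i' i b a hab hb ha hE).symm

end MixedGraph

/-- Lemma 2: if the matrix `[(I-Λ)ᵀ Σ]_{Y, pa(v)}` is invertible for some parameter point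
`(Λ, Ω) ∈ Θ` (with `Σ = φ_G(Λ, Ω)`), then `Y` satisfies the half-trek criterion with
respect to `v`. -/
theorem invertible_implies_htc {V : Type*} [Fintype V] [DecidableEq V]
    (G : MixedGraph V) (v : V) (n : ℕ) (y p : Fin n → V)
    (hy : Function.Injective y) (hp : Function.Injective p)
    (hpa : Finset.univ.image p = G.pa v)
    (hYv : ∀ i, y i ≠ v ∧ y i ∉ G.sib v)
    (h : ∃ θ ∈ G.Theta,
      IsUnit (Matrix.of fun i j : Fin n =>
        (((1 - θ.1)ᵀ * MixedGraph.phi θ.1 θ.2 : Matrix V V ℝ)) (y i) (p j)).det) :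
    G.SatisfiesHTC v (Finset.univ.image y) := by
  obtain ⟨⟨Λ, Ω⟩, ⟨⟨hΛ, hdet⟩, -, hΩ⟩, hU⟩ := h
  dsimp only at hΛ hdet hΩ hU
  have hcardY : (Finset.univ.image y).card = n := by
    rw [Finset.card_image_of_injective _ hy]; simp
  have hcardP : (G.pa v).card = n := by
    rw [← hpa, Finset.card_image_of_injective _ hp]; simp
  -- simplify the matrix
  have hmat : (1 - Λ)ᵀ * MixedGraph.phi Λ Ω = Ω * (1 - Λ)⁻¹ := by
    rw [MixedGraph.phi, Matrix.mul_assoc, ← Matrix.mul_assoc, ← Matrix.transpose_mul,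
      Matrix.nonsing_inv_mul _ hdet, Matrix.transpose_one, Matrix.one_mul]
  rw [hmat] at hU
  -- the bordered matrix
  let A : Matrix (Fin n) V ℝ := Matrix.of fun i w => Ω (y i) w
  let E : Matrix V (Fin n) ℝ := Matrix.of fun w j => if w = p j then 1 else 0
  let M : Matrix (Fin n ⊕ V) (Fin n ⊕ V) ℝ := Matrix.fromBlocks 0 A E (1 - Λ)
  have hM : M.det ≠ 0 := by
    letI := Matrix.invertibleOfIsUnitDet (1 - Λ) hdet
    have hS : A * (1 - Λ)⁻¹ * E = (Matrix.of fun i j : Fin n => (Ω * (1 - Λ)⁻¹) (y i) (p j)) := by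
      ext i j
      simp [A, E, Matrix.mul_apply]
    simp only [M]
    rw [Matrix.det_fromBlocks₂₂, Matrix.invOf_eq_nonsing_inv, hS, zero_sub, Matrix.det_neg]
    refine mul_ne_zero hdet.ne_zero (mul_ne_zero (pow_ne_zero _ (by norm_num)) hU.ne_zero)
  obtain ⟨σ, hσ⟩ : ∃ σ : Equiv.Perm (Fin n ⊕ V), ∀ a, M a (σ a) ≠ 0 := by
    by_contra hc
    push Not at hc
    apply hM
    rw [← Matrix.det_transpose, Matrix.det_apply]
    refine Finset.sum_eq_zero fun σ _ => ?_
    obtain ⟨a, ha⟩ := hc σ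
    rw [Finset.prod_eq_zero (Finset.mem_univ a) (by simpa using ha), smul_zero]
  have h0 : ∀ i, ∃ w, σ (Sum.inl i) = Sum.inr w := by
    intro i
    have := hσ (Sum.inl i)
    rcases hs : σ (Sum.inl i) with j | w
    · rw [hs] at this; simp [M] at this
    · exact ⟨w, rfl⟩
  obtain ⟨L, hne, hchain, hhead, hlast, hdisj⟩ := MixedGraph.perm_paths σ h0
  have hedge : ∀ a b, σ (Sum.inr a) = Sum.inr b ∧ a ≠ b → (a, b) ∈ G.D := by
    rintro a b ⟨hab, hne⟩
    have := hσ (Sum.inr a)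
    by_contra hD
    apply this
    simp [hab, M, hne, hΛ a b hD]
  have htop : ∀ i, y i ≠ (L i).head (hne i) → (y i, (L i).head (hne i)) ∈ G.B := by
    intro i hi
    by_contra hB
    apply hσ (Sum.inl i)
    simp [hhead i, M, A, hΩ _ _ hi hB]
  have hbot : ∀ i, (L i).getLast (hne i) ∈ G.pa v := by
    intro i
    obtain ⟨j, hj⟩ := hlast i
    have := hσ (Sum.inr ((L i).getLast (hne i)))
    rw [hj] at this
    have h2 : (L i).getLast (hne i) = p j := by
      by_contra hc
      apply this
      simp [M, E, hc]
    rw [h2, ← hpa]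
    simp
  let T : Fin n → G.Trek := fun i =>
    { left := [y i]
      right := L i
      left_ne := by simp
      right_ne := hne i
      hasBidir := decide (y i ≠ (L i).head (hne i))
      left_chain := List.isChain_singleton _
      right_chain := (hchain i).imp fun {a b} hab => hedge a b hab
      head_cond := by
        by_cases hc : y i = (L i).head (hne i)
        · simp [← hc]
        · simpa [hc] using htop i hc }
  have hTt : ∀ i j, i ≠ j → (T i).target ≠ (T j).target := by
    intro i j hij hE
    refine hdisj i j hij _ (List.getLast_mem (hne i)) ?_
    have : (L i).getLast (hne i) = (L j).getLast (hne j) := hE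
    rw [this]
    exact List.getLast_mem (hne j)
  obtain ⟨f, hf⟩ : ∃ f : V → G.Trek, ∀ i, f (y i) = T i := by
    let d : G.Trek :=
      { left := [v], right := [v], left_ne := by simp, right_ne := by simp, hasBidir := false,
        left_chain := List.isChain_singleton _, right_chain := List.isChain_singleton _,
        head_cond := by simp }
    exact ⟨Function.extend y T fun _ => d, fun i => hy.extend_apply _ _ _⟩
  refine ⟨by rw [hcardY, hcardP], by simpa using hYv, f, ?_, ⟨?_, ?_, ?_⟩, ?_⟩
  · simp only [Finset.mem_image, Finset.mem_univ, true_and, forall_exists_index,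
      forall_apply_eq_imp_iff, hf]
    intro i
    simp [MixedGraph.Trek.IsHalfTrek, MixedGraph.Trek.leftSet, T]
  · simp only [Finset.mem_image, Finset.mem_univ, true_and, forall_exists_index,
      forall_apply_eq_imp_iff, hf]
    intro i
    simp [MixedGraph.Trek.source, T]
  · apply Finset.eq_of_subset_of_card_le
    · intro w hw
      simp only [Finset.mem_image, Finset.mem_univ, true_and, exists_exists_eq_and, hf] at hw
      obtain ⟨i, rfl⟩ := hw
      exact hbot i
    · rw [hcardP, Finset.image_image, Finset.card_image_of_injective]
      · simp
      · intro i j hij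
        by_contra hc
        simp only [Function.comp, hf] at hij
        exact hTt i j hc hij
  · simp only [Finset.mem_image, Finset.mem_univ, true_and, forall_exists_index,
      forall_apply_eq_imp_iff, hf]
    intro i j hij
    exact hTt i j fun hc => hij (by rw [hc])
  · intro a ha b hb hab
    simp only [Finset.mem_image, Finset.mem_univ, true_and] at ha hb
    obtain ⟨i, rfl⟩ := ha
    obtain ⟨j, rfl⟩ := hb
    rw [hf, hf]
    have hij : i ≠ j := fun hc => hab (by rw [hc])
    refine ⟨by simpa [MixedGraph.Trek.leftSet, T] using hab, ?_⟩
    rw [Finset.disjoint_left]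
    intro w hw hw'
    exact hdisj i j hij w (by simpa [MixedGraph.Trek.rightSet, T] using hw)
      (by simpa [MixedGraph.Trek.rightSet, T] using hw')
end
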